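/- arXiv:2409.13553 — 2 statements merged into one kernel-verified Lean document; each statement's English description precedes it below -/
import Mathlib

section
/- Let F be an infinite field, let u > r ≥ 2 be integers, and let 1 ≤ k ≤ r−1 and 1 ≤ l ≤ u−r. Let P be a partition whose Burge code is α^{u−r−l} β^{l} α^{r−k} β^{k} α. If x ∈ F^N is such that the Jordan type of M_x equals P, then every polynomial in E^Q_{k,l} vanishes at x, i.e., x ∈ X^Q_{k,l}. -/
open Polynomial

noncomputable section

/-- The quotient module `F[t]/(t^m)`. -/
abbrev PQ (F : Type*) [Field F] (m : ℕ) : Type _ := F[X] ⧸ Ideal.span {(X : F[X]) ^ m}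

variable (F : Type*) [Field F]

lemma mulQ_cond (m m' : ℕ) (c : F[X]) (h : (X : F[X]) ^ m' ∣ c * X ^ m) :
    Ideal.span {(X : F[X]) ^ m} ≤
      Submodule.comap (LinearMap.mulLeft F[X] c) (Ideal.span {(X : F[X]) ^ m'}) := by
  rw [Ideal.span_le]
  intro x hx
  rw [Set.mem_singleton_iff] at hx
  subst hx
  simp only [SetLike.mem_coe, Submodule.mem_comap, LinearMap.mulLeft_apply]
  exact Ideal.mem_span_singleton.mpr h

/-- The `F`-linear map `F[t]/(t^m) → F[t]/(t^{m'})` induced by multiplication by the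
polynomial `c`, well-defined whenever `t^{m'} ∣ c · t^m`. -/
def mulQ (m m' : ℕ) (c : F[X]) (h : (X : F[X]) ^ m' ∣ c * X ^ m) :
    PQ F m →ₗ[F] PQ F m' :=
  LinearMap.restrictScalars F
    (Submodule.mapQ (Ideal.span {(X : F[X]) ^ m}) (Ideal.span {(X : F[X]) ^ m'})
      (LinearMap.mulLeft F[X] c) (mulQ_cond F m m' c h))

lemma dvd_A (u : ℕ) (c : F[X]) : (X : F[X]) ^ u ∣ c * X ^ u := Dvd.intro c (mul_comm _ _)

lemma dvd_G (u r : ℕ) (hru : r ≤ u) (g : F[X]) :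
    (X : F[X]) ^ u ∣ (X ^ r * g) * X ^ (u - r) := by
  refine Dvd.intro g ?_
  rw [mul_comm ((X:F[X])^r) g, mul_assoc, ← pow_add, Nat.add_sub_cancel' hru, mul_comm]

lemma dvd_H (u r : ℕ) (h : F[X]) : (X : F[X]) ^ (u - r) ∣ h * X ^ u :=
  Dvd.dvd.mul_left (pow_dvd_pow _ (Nat.sub_le u r)) h

/-- The `F[t]`-module endomorphism of `V = F[t]/(t^u) ⊕ t^r·F[t]/(t^u)` given by
`M(v₁, v₂) = (a v₁ + g v₂, h t^r v₁ + b v₂)`, where the second summand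
`t^r·F[t]/(t^u)` is identified with `F[t]/(t^{u-r})` via `w ↦ t^r w`
(so the lower-left entry becomes `v₁ ↦ h v₁ mod t^{u-r}` and the upper-right
entry becomes `w ↦ t^r g w mod t^u`). -/
def Mmap (u r : ℕ) (hru : r ≤ u) (a g h b : F[X]) :
    (PQ F u × PQ F (u - r)) →ₗ[F] (PQ F u × PQ F (u - r)) :=
  LinearMap.prod
    ((mulQ F u u a (dvd_A F u a)).comp (LinearMap.fst F (PQ F u) (PQ F (u - r))) +
      (mulQ F (u - r) u (X ^ r * g) (dvd_G F u r hru g)).comp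
        (LinearMap.snd F (PQ F u) (PQ F (u - r))))
    ((mulQ F u (u - r) h (dvd_H F u r h)).comp (LinearMap.fst F (PQ F u) (PQ F (u - r))) +
      (mulQ F (u - r) (u - r) b (dvd_A F (u - r) b)).comp
        (LinearMap.snd F (PQ F u) (PQ F (u - r))))

/-- `B` has Jordan type `P` (a partition given as the multiset of its parts):
the corank of every power of `B` is the one prescribed by `P`, i.e.
`dim ker (B^s) = Σ_i min(pᵢ, s)` for all `s ≥ 0`. -/
def JordanTypeIs {V : Type*} [AddCommGroup V] [Module F V] (B : Module.End F V)
    (P : Multiset ℕ) : Prop :=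
  ∀ s : ℕ, Module.finrank F (LinearMap.ker (B ^ s)) = (P.map fun p => min p s).sum

/-- Index type for the `N = 4u-3r-2` coordinates
`(a_1,…,a_{u−1}, b_1,…,b_{u−r−1}, g_0,…,g_{u−r−1}, h_0,…,h_{u−r−1})`. -/
abbrev Vars (u r : ℕ) : Type := Fin (u - 1) ⊕ Fin (u - r - 1) ⊕ Fin (u - r) ⊕ Fin (u - r)

/-- `a = Σ_{i=1}^{u−1} a_i t^i`. -/
def paOf (u r : ℕ) (x : Vars u r → F) : F[X] :=
  ∑ i : Fin (u - 1), C (x (Sum.inl i)) * X ^ ((i : ℕ) + 1)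

/-- `b = Σ_{i=1}^{u−r−1} b_i t^i`. -/
def pbOf (u r : ℕ) (x : Vars u r → F) : F[X] :=
  ∑ i : Fin (u - r - 1), C (x (Sum.inr (Sum.inl i))) * X ^ ((i : ℕ) + 1)

/-- `g = Σ_{i=0}^{u−r−1} g_i t^i`. -/
def pgOf (u r : ℕ) (x : Vars u r → F) : F[X] :=
  ∑ i : Fin (u - r), C (x (Sum.inr (Sum.inr (Sum.inl i)))) * X ^ (i : ℕ)

/-- `h = Σ_{i=0}^{u−r−1} h_i t^i`. -/
def phOf (u r : ℕ) (x : Vars u r → F) : F[X] :=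
  ∑ i : Fin (u - r), C (x (Sum.inr (Sum.inr (Sum.inr i)))) * X ^ (i : ℕ)

/-- The nilpotent endomorphism `M_x` of `V` determined by the point `x ∈ F^N`. -/
def Mx (u r : ℕ) (hru : r ≤ u) (x : Vars u r → F) :
    Module.End F (PQ F u × PQ F (u - r)) :=
  Mmap F u r hru (paOf F u r x) (pgOf F u r x) (phOf F u r x) (pbOf F u r x)

/-- The variable `a_i` as a polynomial function on `F^N` (meaningful for `1 ≤ i ≤ u-1`). -/
def Av (u r : ℕ) (i : ℕ) : MvPolynomial (Vars u r) F :=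
  if h : i - 1 < u - 1 then MvPolynomial.X (Sum.inl ⟨i - 1, h⟩) else 0

/-- The variable `b_i` as a polynomial function on `F^N` (meaningful for `1 ≤ i ≤ u-r-1`). -/
def Bv (u r : ℕ) (i : ℕ) : MvPolynomial (Vars u r) F :=
  if h : i - 1 < u - r - 1 then MvPolynomial.X (Sum.inr (Sum.inl ⟨i - 1, h⟩)) else 0

/-- The variable `g_i` as a polynomial function on `F^N` (meaningful for `0 ≤ i ≤ u-r-1`). -/
def Gv (u r : ℕ) (i : ℕ) : MvPolynomial (Vars u r) F :=
  if h : i < u - r then MvPolynomial.X (Sum.inr (Sum.inr (Sum.inl ⟨i, h⟩))) else 0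

/-- The variable `h_i` as a polynomial function on `F^N` (meaningful for `0 ≤ i ≤ u-r-1`). -/
def Hv (u r : ℕ) (i : ℕ) : MvPolynomial (Vars u r) F :=
  if h : i < u - r then MvPolynomial.X (Sum.inr (Sum.inr (Sum.inr ⟨i, h⟩))) else 0

/-- The set of polynomials `E^Q_{k,l}` for `Q = (u, u-r)`:
`{a_1,…,a_{k−1}, b_1,…,b_{l−1}}` if `k+l ≤ r`, and
`{a_1,…,a_{k−1}, b_1,…,b_{r−k−1}}` together with the quadratic polynomials
`Σ_{j=0}^{m} a_{k+j} b_{r−k+m−j} − Σ_{j=0}^{m} g_j h_{m−j}` for `0 ≤ m ≤ k+l−r−1`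
if `k+l ≥ r+1`. -/
def Eset (u r k l : ℕ) : Set (MvPolynomial (Vars u r) F) :=
  if k + l ≤ r then
    {p | ∃ i, 1 ≤ i ∧ i ≤ k - 1 ∧ p = Av F u r i} ∪
      {p | ∃ i, 1 ≤ i ∧ i ≤ l - 1 ∧ p = Bv F u r i}
  else
    {p | ∃ i, 1 ≤ i ∧ i ≤ k - 1 ∧ p = Av F u r i} ∪
      {p | ∃ i, 1 ≤ i ∧ i ≤ r - k - 1 ∧ p = Bv F u r i} ∪
      {p | ∃ m, m ≤ k + l - r - 1 ∧ p =
        (∑ j ∈ Finset.range (m + 1), Av F u r (k + j) * Bv F u r (r - k + m - j)) -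
          (∑ j ∈ Finset.range (m + 1), Gv F u r j * Hv F u r (m - j))}

/-- The common zero locus in `F^N` of a set `T` of polynomials. -/
def zLocus (u r : ℕ) (T : Set (MvPolynomial (Vars u r) F)) : Set (Vars u r → F) :=
  {x | ∀ p ∈ T, MvPolynomial.eval x p = 0}

/-- `X^Q_{k,l}`, the common zero locus of `E^Q_{k,l}`. -/
def Xlocus (u r k l : ℕ) : Set (Vars u r → F) := zLocus F u r (Eset F u r k l)

/-- Zariski-closed subsets of `F^N`: common zero loci of sets of polynomials. -/
def IsZClosed (u r : ℕ) (S : Set (Vars u r → F)) : Prop :=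
  ∃ T : Set (MvPolynomial (Vars u r) F), S = zLocus F u r T

/-- The Zariski closure of a subset of `F^N`. -/
def zClosure (u r : ℕ) (S : Set (Vars u r → F)) : Set (Vars u r → F) :=
  ⋂₀ {C | IsZClosed F u r C ∧ S ⊆ C}

end

section Burge

/-- Scanning the frequency sequence `f` downward from `j`, forming backward pairs:
whenever `f j > 0` (and `j` has not been consumed by a previously formed pair),
put `j` in the set and consume the index `j - 1`. -/
def RsetGo (f : ℕ → ℕ) : ℕ → Finset ℕ
  | 0 => ∅
  | 1 => if 0 < f 1 then {1} else ∅
  | (j + 2) => if 0 < f (j + 2) then insert (j + 2) (RsetGo f j) else RsetGo f (j + 1)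

/-- The set `R(P)` of a partition `P` (given as the multiset of its parts, with
frequency sequence `j ↦ P.count j`); the scan starts at the largest part `P.sup`. -/
def Rset (P : Multiset ℕ) : Finset ℕ := RsetGo (fun j => P.count j) P.sup

/-- The partition `∂P`: for each `j ∈ R(P)` one copy of the part `j` is replaced by
`j - 1` (discarded when `j - 1 = 0`). -/
def dP (P : Multiset ℕ) : Multiset ℕ :=
  (P - (Rset P).val) + (((Rset P).val.map fun j => j - 1).filter fun j => 0 < j)

/-- Fuel-driven computation of the Burge code; `false` stands for `α`, `true` for `β`.
(The fuel `P.sum + 1` used in `burgeCode` always suffices, since `∂` strictly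
decreases the size of a nonempty partition.) -/
def burgeGo : ℕ → Multiset ℕ → List Bool
  | 0, _ => []
  | (n + 1), P =>
    if P = 0 then [false]
    else (if 1 ∈ Rset P then true else false) :: burgeGo n (dP P)

/-- The Burge code of the partition `P`: the word `w_1 ⋯ w_m` with `w_i = β` (`true`)
if `∂^{i-1} P` is in class `B` (i.e. `1 ∈ R(∂^{i-1}P)`) and `w_i = α` (`false`)
otherwise, where `m = min { i : ∂^{i-1} P = (0) }`. -/
def burgeCode (P : Multiset ℕ) : List Bool := burgeGo (P.sum + 1) P

/-- The almost rectangular partition `[m]^k` of `m` into `k` parts, each equal to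
`⌈m/k⌉` or `⌊m/k⌋`. -/
def arPart (m k : ℕ) : Multiset ℕ :=
  Multiset.replicate (m % k) (m / k + 1) + Multiset.replicate (k - m % k) (m / k)

/-- Greedy decomposition of a weakly decreasing list of parts into maximal
almost rectangular segments from the top (fuel-driven helper). -/
def greedyGo : ℕ → List ℕ → List (List ℕ)
  | 0, _ => []
  | _ + 1, [] => []
  | n + 1, p :: rest =>
    ((p :: rest).takeWhile fun q => decide (p ≤ q + 1)) ::
      greedyGo n ((p :: rest).dropWhile fun q => decide (p ≤ q + 1))

/-- The greedy decomposition of a weakly decreasing list of parts into maximal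
almost rectangular subpartitions from the top. -/
def greedy (l : List ℕ) : List (List ℕ) := greedyGo l.length l

end Burge

section BurgeLemmas

/-- `K_P(s) = Σ min(p, s)`. -/
def Kf (P : Multiset ℕ) (s : ℕ) : ℕ := (P.map fun p => min p s).sum

lemma RsetGo_le (f : ℕ → ℕ) : ∀ n j, j ∈ RsetGo f n → 1 ≤ j ∧ j ≤ n ∧ 0 < f j
  | 0, j, h => by simp [RsetGo] at h
  | 1, j, h => by
    rw [RsetGo] at h
    split_ifs at h with h1
    · simp at h; subst h; simp [h1]
    · simp at h
  | (n + 2), j, h => by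
    rw [RsetGo] at h
    split_ifs at h with h1
    · rw [Finset.mem_insert] at h
      rcases h with rfl | h
      · exact ⟨by omega, le_rfl, h1⟩
      · have := RsetGo_le f n j h
        exact ⟨this.1, by omega, this.2.2⟩
    · have := RsetGo_le f (n + 1) j h
      exact ⟨this.1, by omega, this.2.2⟩

lemma RsetGo_succ (f : ℕ → ℕ) : ∀ n j, j + 1 ∈ RsetGo f n → j ∉ RsetGo f n
  | 0, j, h => by simp [RsetGo] at h
  | 1, j, h => by
    intro h'
    have := RsetGo_le f 1 _ h
    have := RsetGo_le f 1 _ h'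
    omega
  | (n + 2), j, h => by
    intro h'
    rw [RsetGo] at h h'
    split_ifs at h h' with h1
    · rw [Finset.mem_insert] at h h'
      rcases h with h | h
      · rcases h' with h' | h'
        · omega
        · have := RsetGo_le f n _ h'
          omega
      · rcases h' with h' | h'
        · have := RsetGo_le f n _ h
          omega
        · exact RsetGo_succ f n j h h'
    · exact RsetGo_succ f (n + 1) j h h'

lemma RsetGo_mem (f : ℕ → ℕ) : ∀ n j, 1 ≤ j → j ≤ n → 0 < f j → j + 1 ∉ RsetGo f n →
    j ∈ RsetGo f n
  | 0, j, h1, h2, h3, h4 => by omega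
  | 1, j, h1, h2, h3, h4 => by
    have : j = 1 := by omega
    subst this
    simp [RsetGo, h3]
  | (n + 2), j, h1, h2, h3, h4 => by
    rw [RsetGo] at h4 ⊢
    split_ifs at h4 ⊢ with h
    · rw [Finset.mem_insert] at h4 ⊢
      push Not at h4
      by_cases e : j = n + 2
      · exact Or.inl e
      · exact Or.inr (RsetGo_mem f n j h1 (by omega) h3 h4.2)
    · have : j ≠ n + 2 := by
        rintro rfl; exact h h3
      exact RsetGo_mem f (n + 1) j h1 (by omega) h3 h4

lemma Rset_pos {P : Multiset ℕ} {j : ℕ} (h : j ∈ Rset P) : 1 ≤ j ∧ 0 < P.count j := by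
  have := RsetGo_le _ _ _ h
  exact ⟨this.1, this.2.2⟩

lemma Rset_succ {P : Multiset ℕ} {j : ℕ} (h : j + 1 ∈ Rset P) : j ∉ Rset P :=
  RsetGo_succ _ _ _ h

lemma Rset_mem {P : Multiset ℕ} {j : ℕ} (hj : 1 ≤ j) (h : 0 < P.count j)
    (h' : j + 1 ∉ Rset P) : j ∈ Rset P := by
  refine RsetGo_mem _ _ _ hj ?_ h h'
  exact Multiset.le_sup (Multiset.count_pos.1 h)

lemma Rset_val_le (P : Multiset ℕ) : (Rset P).val ≤ P := by
  rw [Multiset.le_iff_subset (Rset P).nodup]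
  intro j hj
  exact Multiset.count_pos.1 (Rset_pos hj).2

lemma dP_sum (P : Multiset ℕ) (g : ℕ → ℕ) (g0 : g 0 = 0) :
    ((dP P).map g).sum + ∑ j ∈ Rset P, g j = (P.map g).sum + ∑ j ∈ Rset P, g (j - 1) := by
  have h1 : (P.map g).sum = ((P - (Rset P).val).map g).sum + ∑ j ∈ Rset P, g j := by
    conv_lhs => rw [← Multiset.sub_add_cancel (Rset_val_le P)]
    rw [Multiset.map_add, Multiset.sum_add]
    rfl
  have h2 : ∀ T : Multiset ℕ, (((T.map fun j => j - 1).filter fun j => 0 < j).map g).sum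
      = (T.map fun j => g (j - 1)).sum := by
    intro T
    induction T using Multiset.induction_on with
    | empty => simp
    | cons a T ih =>
      rw [Multiset.map_cons, Multiset.filter_cons, Multiset.map_add, Multiset.sum_add, ih,
        Multiset.map_cons, Multiset.sum_cons]
      congr 1
      split_ifs with h
      · simp
      · have : a - 1 = 0 := by omega
        simp [this, g0]
  rw [dP, Multiset.map_add, Multiset.sum_add, h2, h1]
  change _ = _ + ((Rset P).val.map fun j => g (j - 1)).sum
  omega

lemma Kf_dP (P : Multiset ℕ) (s : ℕ) :
    Kf P s = Kf (dP P) s + ((Rset P).filter fun j => j ≤ s).card := by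
  have h := dP_sum P (fun p => min p s) (by simp)
  have h2 : ∑ j ∈ Rset P, min j s
      = ∑ j ∈ Rset P, min (j - 1) s + ((Rset P).filter fun j => j ≤ s).card := by
    rw [Finset.card_filter, ← Finset.sum_add_distrib]
    refine Finset.sum_congr rfl fun j hj => ?_
    have := (Rset_pos hj).1
    split_ifs <;> omega
  unfold Kf
  simp only at h
  omega

lemma sum_dP (P : Multiset ℕ) : (dP P).sum + (Rset P).card = P.sum := by
  have h := dP_sum P id rfl
  simp only [id, Multiset.map_id'] at h
  have h2 : ∑ j ∈ Rset P, j = ∑ j ∈ Rset P, (j - 1) + (Rset P).card := by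
    rw [Finset.card_eq_sum_ones, ← Finset.sum_add_distrib]
    refine Finset.sum_congr rfl fun j hj => ?_
    have := (Rset_pos hj).1
    omega
  omega

lemma zero_notMem_dP {P : Multiset ℕ} (h : 0 ∉ P) : 0 ∉ dP P := by
  unfold dP
  rw [Multiset.mem_add]
  rintro (h' | h')
  · exact h (Multiset.mem_of_le (Multiset.sub_le_self _ _) h')
  · simp at h'

lemma Rset_nonempty {P : Multiset ℕ} (h : 0 ∉ P) (hP : P ≠ 0) : 0 < (Rset P).card := by
  obtain ⟨a, ha⟩ := Multiset.exists_mem_of_ne_zero hP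
  rw [Finset.card_pos]
  by_cases e : a + 1 ∈ Rset P
  · exact ⟨_, e⟩
  · refine ⟨a, Rset_mem ?_ (Multiset.count_pos.2 ha) e⟩
    by_contra h0
    have : a = 0 := by omega
    exact h (this ▸ ha)

lemma Kf_count (P : Multiset ℕ) (y : ℕ) :
    Kf P y + Kf P (y + 2) + P.count (y + 1) = 2 * Kf P (y + 1) := by
  unfold Kf
  induction P using Multiset.induction_on with
  | empty => simp
  | cons a T ih =>
    simp only [Multiset.map_cons, Multiset.sum_cons, Multiset.count_cons]
    split_ifs <;> omega

lemma mem_dP_of_succ {P : Multiset ℕ} {j : ℕ} (hj : 1 ≤ j) (h : j + 1 ∈ Rset P) :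
    0 < (dP P).count j := by
  rw [Multiset.count_pos]
  unfold dP
  rw [Multiset.mem_add]
  right
  rw [Multiset.mem_filter, Multiset.mem_map]
  exact ⟨⟨j + 1, h, by omega⟩, hj⟩

lemma succ_mem_of_dP {P : Multiset ℕ} {j : ℕ} (hj : 1 ≤ j) (h : 0 < (dP P).count j)
    (h' : j ∉ Rset P) : j + 1 ∈ Rset P := by
  by_contra h1
  apply h'
  refine Rset_mem hj ?_ h1
  rw [Multiset.count_pos] at h ⊢
  unfold dP at h
  rw [Multiset.mem_add] at h
  rcases h with h | h
  · exact Multiset.mem_of_le (Multiset.sub_le_self _ _) h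
  · rw [Multiset.mem_filter, Multiset.mem_map] at h
    obtain ⟨⟨a, ha, e⟩, -⟩ := h
    have := (Rset_pos ha).1
    have : a = j + 1 := by omega
    exact absurd (this ▸ ha) h1

lemma card_filter_succ (R : Finset ℕ) (s : ℕ) :
    (R.filter fun j => j ≤ s + 1).card
      = (R.filter fun j => j ≤ s).card + (if s + 1 ∈ R then 1 else 0) := by
  simp only [Finset.card_filter]
  have : ∀ j, (if j ≤ s + 1 then 1 else 0) = (if j ≤ s then 1 else 0) +
      (if j = s + 1 then 1 else 0) := by
    intro j; split_ifs <;> omega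
  simp only [this, Finset.sum_add_distrib]
  simp

/-- One step of the inverse of `∂`, on the level of the functions `K`. -/
lemma Kf_step (P : Multiset ℕ) (K' J : ℕ → ℤ) (hK : ∀ s, (Kf (dP P) s : ℤ) = K' s)
    (b : Bool) (hb : (1 ∈ Rset P) ↔ b = true)
    (J0 : J 0 = K' 0) (J1 : J 1 = K' 1 + (if b = true then 1 else 0))
    (hJ : ∀ y, J (y + 2) - K' (y + 2) = J (y + 1) - K' (y + 1) +
      (if K' y + K' (y + 2) < 2 * K' (y + 1) ∧ J (y + 1) - K' (y + 1) = J y - K' y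
        then 1 else 0)) :
    ∀ s, (Kf P s : ℤ) = J s := by
  set ρ : ℕ → ℕ := fun s => ((Rset P).filter fun j => j ≤ s).card with hρ
  have hρs : ∀ s, ρ (s + 1) = ρ s + (if s + 1 ∈ Rset P then 1 else 0) :=
    fun s => card_filter_succ _ _
  have hρ0 : ρ 0 = 0 := by
    simp only [hρ, Finset.card_eq_zero, Finset.filter_eq_empty_iff]
    intro j hj
    have := (Rset_pos hj).1
    omega
  have key : ∀ s, (ρ s : ℤ) = J s - K' s ∧ (ρ (s + 1) : ℤ) = J (s + 1) - K' (s + 1) := by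
    intro s
    induction s with
    | zero =>
      refine ⟨by rw [hρ0, J0]; simp, ?_⟩
      rw [hρs 0, hρ0, J1]
      simp only [zero_add]
      by_cases h : b = true
      · simp [h, hb.2 h]
      · have : 1 ∉ Rset P := fun h' => h (hb.1 h')
        simp [h, this]
    | succ s ih =>
      obtain ⟨h1, h2⟩ := ih
      refine ⟨h2, ?_⟩
      rw [hJ s, ← h2, hρs (s + 1)]
      push_cast
      congr 1
      have hc := Kf_count (dP P) s
      have hc' : K' s + K' (s + 2) + ((dP P).count (s + 1) : ℤ) = 2 * K' (s + 1) := by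
        rw [← hK, ← hK, ← hK]; exact_mod_cast hc
      have hρ1 := hρs s
      by_cases hm : s + 1 + 1 ∈ Rset P
      · rw [if_pos hm, if_pos]
        constructor
        · have := mem_dP_of_succ (by omega) hm
          omega
        · rw [if_neg (Rset_succ hm)] at hρ1
          omega
      · rw [if_neg hm, if_neg]
        rintro ⟨g1, g2⟩
        apply hm
        refine succ_mem_of_dP (by omega) (by omega) ?_
        intro h3
        rw [if_pos h3] at hρ1
        omega
  intro s
  have h1 := Kf_dP P s
  have h2 := (key s).1
  have h3 := hK s
  have : (Kf P s : ℤ) = Kf (dP P) s + ρ s := by exact_mod_cast h1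
  omega

/-- `P` has code `w` (with enough fuel). -/
def HasCode (P : Multiset ℕ) (w : List Bool) : Prop :=
  0 ∉ P ∧ ∃ n, P.sum < n ∧ burgeGo n P = w

lemma HasCode.cons {P : Multiset ℕ} {b : Bool} {w : List Bool} (h : HasCode P (b :: w))
    (hw : w ≠ []) : HasCode (dP P) w ∧ ((1 ∈ Rset P) ↔ b = true) := by
  obtain ⟨h0, n, hn, hc⟩ := h
  match n, hn, hc with
  | 0, hn, hc => omega
  | (m + 1), hn, hc =>
    rw [burgeGo] at hc
    split_ifs at hc with hP hR
    · simp at hc; exact absurd hc.2.symm (by simpa using hw)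
    all_goals
      simp only [List.cons.injEq] at hc
      have h1 := Rset_nonempty h0 hP
      have h2 := sum_dP P
      refine ⟨⟨zero_notMem_dP h0, m, by omega, hc.2⟩, ?_⟩
      simp [hR, ← hc.1]

lemma HasCode.nil {P : Multiset ℕ} {b : Bool} (h : HasCode P [b]) : P = 0 := by
  obtain ⟨h0, n, hn, hc⟩ := h
  by_contra hP
  have h1 := Rset_nonempty h0 hP
  have h2 := sum_dP P
  match n, hn, hc with
  | 0, hn, hc => omega
  | 1, hn, hc => omega
  | (m + 2), hn, hc =>
    rw [burgeGo, if_neg hP, burgeGo] at hc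
    split_ifs at hc <;> simp at hc

end BurgeLemmas

section BurgeStages

/-- The function `K` in the first stage, `1^m`. -/
def K1 (m : ℤ) (s : ℕ) : ℤ := if s = 0 then 0 else m

/-- The function `K` of the almost rectangular partition of `n` into `k` parts. -/
def K2 (k n : ℤ) (s : ℕ) : ℤ := min (k * s) n

/-- The function `K` of the final partition. -/
def KT (k l lh r v : ℤ) (s : ℕ) : ℤ :=
  min (min (s * k + s * l) (v + s * k)) (min (v + r + s * lh - 2 * lh) (2 * v + r))

lemma step1 (m : ℤ) (y : ℕ) :
    K1 (m + 1) (y + 2) - K1 m (y + 2) = K1 (m + 1) (y + 1) - K1 m (y + 1) +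
      (if K1 m y + K1 m (y + 2) < 2 * K1 m (y + 1) ∧
        K1 (m + 1) (y + 1) - K1 m (y + 1) = K1 (m + 1) y - K1 m y then 1 else 0) := by
  unfold K1
  rcases y with _ | y <;> (simp; try omega)

lemma step2 (k n : ℤ) (hk : 1 ≤ k) (y : ℕ) :
    K2 k (n + 1) (y + 2) - K2 k n (y + 2) = K2 k (n + 1) (y + 1) - K2 k n (y + 1) +
      (if K2 k n y + K2 k n (y + 2) < 2 * K2 k n (y + 1) ∧
        K2 k (n + 1) (y + 1) - K2 k n (y + 1) = K2 k (n + 1) y - K2 k n y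
          then 1 else 0) := by
  unfold K2
  push_cast
  have e1 : k * ((y : ℤ) + 1) = k * y + k := by ring
  have e2 : k * ((y : ℤ) + 2) = k * y + 2 * k := by ring
  rw [e1, e2]
  generalize k * (y : ℤ) = Y
  split_ifs <;> omega

/-- The function `KT` as a function of the products. -/
def kt (r v lh Y Z W : ℤ) : ℤ :=
  min (min (Y + Z) (v + Y)) (min (v + r + W - 2 * lh) (2 * v + r))

lemma kt_diff (r v lh Y Z W : ℤ) (h0 : 0 ≤ lh) (h : W ≤ Z) :
    (Z ≤ v ∧ Y + Z ≤ v + r + W - 2 * lh ∧ kt r (v + 1) lh Y Z W = kt r v lh Y Z W) ∨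
    (v + r < Y ∧ v < W - 2 * lh ∧ kt r (v + 1) lh Y Z W = kt r v lh Y Z W + 2) ∨
    (¬ (Z ≤ v ∧ Y + Z ≤ v + r + W - 2 * lh) ∧ ¬ (v + r < Y ∧ v < W - 2 * lh) ∧
      kt r (v + 1) lh Y Z W = kt r v lh Y Z W + 1) := by
  unfold kt
  omega

lemma kt_eq1 {r v lh Y Z W : ℤ} (h1 : Z ≤ v) (h2 : Y + Z ≤ v + r + W - 2 * lh)
    (h3 : Y + Z ≤ 2 * v + r) : kt r v lh Y Z W = Y + Z := by
  unfold kt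
  omega

lemma kt_eq2 {r v lh Y Z W : ℤ} (h1 : v ≤ Z) (h2 : Y ≤ r + W - 2 * lh)
    (h3 : Y ≤ v + r) : kt r v lh Y Z W = v + Y := by
  unfold kt
  omega

lemma kt_eq3 {r v lh Y Z W : ℤ} (h1 : v + r + W - 2 * lh ≤ Y + Z) (h2 : r + W - 2 * lh ≤ Y)
    (h3 : W - 2 * lh ≤ v) : kt r v lh Y Z W = v + r + W - 2 * lh := by
  unfold kt
  omega

lemma kt_eq4 {r v lh Y Z W : ℤ} (h1 : 2 * v + r ≤ Y + Z) (h2 : v + r ≤ Y)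
    (h3 : v ≤ W - 2 * lh) : kt r v lh Y Z W = 2 * v + r := by
  unfold kt
  omega

lemma kt_le {r v lh Y Z W : ℤ} :
    kt r v lh Y Z W ≤ Y + Z ∧ kt r v lh Y Z W ≤ v + Y ∧ kt r v lh Y Z W ≤ v + r + W - 2 * lh ∧
    kt r v lh Y Z W ≤ 2 * v + r := by
  unfold kt
  omega

lemma kt_neither {k l lh r v Y Z W : ℤ} (hk : 1 ≤ k) (hl : 1 ≤ l) (hlh3 : 1 ≤ lh)
    (hlh1 : lh ≤ l) (hlh2 : k + lh ≤ r) (hv : l ≤ v) (hWZ : W ≤ Z)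
    (hc : (Y = 0 ∧ Z = 0 ∧ W = 0) ∨ (k ≤ lh ∧ lh - k ≤ W - Y) ∨
      (lh < k ∧ lh = l ∧ W = Z ∧ k - l ≤ Y - Z) ∨
      (lh < k ∧ lh = r - k ∧ k - lh ≤ Y - W))
    (hA : ¬ (Z ≤ v ∧ Y + Z ≤ v + r + W - 2 * lh))
    (hC : ¬ (v + r < Y + 2 * k ∧ v < W + 2 * lh - 2 * lh)) :
    2 * kt r v lh (Y + k) (Z + l) (W + lh) ≤
      kt r v lh Y Z W + kt r v lh (Y + 2 * k) (Z + 2 * l) (W + 2 * lh) := by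
  rcases hc with hc | hc | hc | hc
  · exact absurd ⟨by omega, by omega⟩ hA
  · have h1 : v ≤ Z := by
      by_contra h
      exact hA ⟨by omega, by omega⟩
    have h2 : Y + 2 * k ≤ v + r := by
      by_contra h
      exact hC ⟨by omega, by omega⟩
    rw [kt_eq2 (Y := Y), kt_eq2, kt_eq2] <;> omega
  · by_cases hZ : Z ≤ v
    · have h1 : ¬ (Y + Z ≤ v + r + W - 2 * lh) := fun h => hA ⟨hZ, h⟩
      rw [kt_eq3 (Y := Y), kt_eq3, kt_eq3] <;> omega
    · have h2 : Y + 2 * k ≤ v + r := by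
        by_contra h
        exact hC ⟨by omega, by omega⟩
      rw [kt_eq2 (Y := Y), kt_eq2, kt_eq2] <;> omega
  · have h2 : W ≤ v := by
      by_contra h
      exact hC ⟨by omega, by omega⟩
    have h3 : v + r + W - 2 * lh ≤ Y + Z := by
      by_contra h
      exact hA ⟨by omega, by omega⟩
    rw [kt_eq3 (Y := Y), kt_eq3, kt_eq3] <;> omega

lemma kt_conc {k l lh r v Y Z W : ℤ} (hk : 1 ≤ k) (hl : 1 ≤ l) (hlh3 : 1 ≤ lh)
    (hlh1 : lh ≤ l) (hWZ : W ≤ Z)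
    (hC1 : ¬ (v + r < Y + k ∧ v < W + lh - 2 * lh))
    (hC2 : v + r < Y + 2 * k ∧ v < W + 2 * lh - 2 * lh) :
    kt r v lh Y Z W + kt r v lh (Y + 2 * k) (Z + 2 * l) (W + 2 * lh)
          < 2 * kt r v lh (Y + k) (Z + l) (W + lh) := by
  have b0 := @kt_le r v lh Y Z W
  have b2 := @kt_le r v lh (Y + 2 * k) (Z + 2 * l) (W + 2 * lh)
  by_cases c1 : Y + k ≤ v + r
  · by_cases c2 : Y + k ≤ r + (W + lh) - 2 * lh
    · rw [kt_eq2 (Y := Y + k)] <;> omega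
    · rw [kt_eq3 (Y := Y + k)] <;> omega
  · have c3 : W + lh - 2 * lh ≤ v := by
      by_contra h
      exact hC1 ⟨by omega, by omega⟩
    by_cases c2 : Y + k ≤ r + (W + lh) - 2 * lh
    · rw [kt_eq2 (Y := Y + k)] <;> omega
    · rw [kt_eq3 (Y := Y + k)] <;> omega

lemma kt_step (k l lh r v Y Z W : ℤ) (hk : 1 ≤ k) (hl : 1 ≤ l) (hlh : lh = min l (r - k))
    (hkr : k + 1 ≤ r) (hv : l ≤ v) (hWZ : W ≤ Z)
    (hc : (Y = 0 ∧ Z = 0 ∧ W = 0) ∨ (k ≤ lh ∧ lh - k ≤ W - Y) ∨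
      (lh < k ∧ lh = l ∧ W = Z ∧ k - l ≤ Y - Z) ∨
      (lh < k ∧ lh = r - k ∧ k - lh ≤ Y - W)) :
    kt r (v + 1) lh (Y + 2 * k) (Z + 2 * l) (W + 2 * lh)
        - kt r v lh (Y + 2 * k) (Z + 2 * l) (W + 2 * lh)
      = kt r (v + 1) lh (Y + k) (Z + l) (W + lh) - kt r v lh (Y + k) (Z + l) (W + lh) +
      (if kt r v lh Y Z W + kt r v lh (Y + 2 * k) (Z + 2 * l) (W + 2 * lh)
          < 2 * kt r v lh (Y + k) (Z + l) (W + lh) ∧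
        kt r (v + 1) lh (Y + k) (Z + l) (W + lh) - kt r v lh (Y + k) (Z + l) (W + lh)
          = kt r (v + 1) lh Y Z W - kt r v lh Y Z W then 1 else 0) := by
  have hlh1 : lh ≤ l := by clear hc; omega
  have hlh2 : k + lh ≤ r := by clear hc; omega
  have hlh3 : 1 ≤ lh := by clear hc; omega
  clear hlh
  have hN := fun a b => kt_neither (v := v) hk hl hlh3 hlh1 hlh2 hv hWZ hc a b
  have hCC := fun a b => kt_conc (r := r) (Y := Y) (v := v) hk hl hlh3 hlh1 hWZ a b
  clear hc
  have w1 : W + lh ≤ Z + l := by linarith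
  have w2 : W + 2 * lh ≤ Z + 2 * l := by linarith
  have w0 : 0 ≤ lh := by linarith
  rcases kt_diff r v lh (Y + 2 * k) (Z + 2 * l) (W + 2 * lh) w0 w2 with
    ⟨a1, a2, a3⟩ | ⟨a1, a2, a3⟩ | ⟨a1, a2, a3⟩
  · rw [a3, kt_eq1 (Y := Y), kt_eq1 (Y := Y + k), kt_eq1 (Y := Y + 2 * k),
      kt_eq1 (Y := Y + k), if_neg] <;> omega
  · rcases kt_diff r v lh (Y + k) (Z + l) (W + lh) w0 w1 with
      ⟨e1, e2, e3⟩ | ⟨e1, e2, e3⟩ | ⟨e1, e2, e3⟩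
    · omega
    · rw [a3, e3, if_neg]
      · ring
      · rintro ⟨h1, h2⟩
        rcases kt_diff r v lh Y Z W w0 hWZ with ⟨f1, f2, f3⟩ | ⟨f1, f2, f3⟩ | ⟨f1, f2, f3⟩
        · omega
        · rw [kt_eq4 (Y := Y), kt_eq4 (Y := Y + k), kt_eq4 (Y := Y + 2 * k)] at h1 <;> omega
        · omega
    · have hh := hCC e2 ⟨a1, a2⟩
      rw [a3, e3, if_pos]
      · ring
      · refine ⟨hh, ?_⟩
        rcases kt_diff r v lh Y Z W w0 hWZ with ⟨f1, f2, f3⟩ | ⟨f1, f2, f3⟩ | ⟨f1, f2, f3⟩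
        · omega
        · exact absurd ⟨by linarith, by linarith⟩ e2
        · linarith
  · rcases kt_diff r v lh (Y + k) (Z + l) (W + lh) w0 w1 with
      ⟨e1, e2, e3⟩ | ⟨e1, e2, e3⟩ | ⟨e1, e2, e3⟩
    · have q0 : kt r v lh Y Z W = Y + Z := by apply kt_eq1 <;> linarith
      have q0' : kt r (v + 1) lh Y Z W = Y + Z := by apply kt_eq1 <;> linarith
      have q1 : kt r v lh (Y + k) (Z + l) (W + lh) = (Y + k) + (Z + l) := by
        apply kt_eq1 <;> linarith
      have b2 := @kt_le r v lh (Y + 2 * k) (Z + 2 * l) (W + 2 * lh)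
      rw [a3, e3, if_pos]
      · ring
      · rw [q0, q0', q1]
        refine ⟨?_, by ring⟩
        by_contra h
        exact a1 ⟨by linarith, by linarith⟩
    · exact absurd ⟨by linarith, by linarith⟩ a2
    · rw [a3, e3, if_neg]
      · ring
      · rintro ⟨h1, h2⟩
        rcases kt_diff r v lh Y Z W w0 hWZ with ⟨f1, f2, f3⟩ | ⟨f1, f2, f3⟩ | ⟨f1, f2, f3⟩
        · linarith
        · linarith
        · have := hN f1 a2
          linarith

lemma step4 (k l lh r v : ℤ) (hk : 1 ≤ k) (hl : 1 ≤ l) (hlh : lh = min l (r - k))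
    (hkr : k + 1 ≤ r) (hv : l ≤ v) (y : ℕ) :
    KT k l lh r (v + 1) (y + 2) - KT k l lh r v (y + 2)
      = KT k l lh r (v + 1) (y + 1) - KT k l lh r v (y + 1) +
      (if KT k l lh r v y + KT k l lh r v (y + 2) < 2 * KT k l lh r v (y + 1) ∧
        KT k l lh r (v + 1) (y + 1) - KT k l lh r v (y + 1)
          = KT k l lh r (v + 1) y - KT k l lh r v y then 1 else 0) := by
  have hy : (0 : ℤ) ≤ y := by positivity
  have key := kt_step k l lh r v (y * k) (y * l) (y * lh) hk hl hlh hkr hv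
    (by nlinarith [min_le_left l (r - k)])
    (by
      rcases Nat.eq_zero_or_pos y with h0 | h0
      · left; simp [h0]
      · right
        have h1 : (1 : ℤ) ≤ y := by exact_mod_cast h0
        by_cases c1 : k ≤ lh
        · left; exact ⟨c1, by nlinarith⟩
        · by_cases c2 : lh = l
          · right; left; exact ⟨by omega, c2, by rw [c2], by nlinarith⟩
          · right; right; exact ⟨by omega, by omega, by nlinarith⟩)
  have e : ∀ v : ℤ, ∀ s : ℕ, KT k l lh r v s = kt r v lh (s * k) (s * l) (s * lh) :=
    fun v s => rfl
  have e1 : ∀ k : ℤ, ((y + 1 : ℕ) : ℤ) * k = y * k + k := by intro k; push_cast; ring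
  have e2 : ∀ k : ℤ, ((y + 2 : ℕ) : ℤ) * k = y * k + 2 * k := by intro k; push_cast; ring
  simp only [e, e1, e2]
  exact key

lemma kt_big {r v lh Y Z Z' W : ℤ} (h : v ≤ Z) (h' : v ≤ Z') :
    kt r v lh Y Z W = kt r v lh Y Z' W := by
  unfold kt
  omega

lemma step3A (k l lh r : ℤ) (hk : 1 ≤ k) (hl : 1 ≤ l) (hlh : lh = r - k) (hlh2 : lh ≤ l)
    (hkr : k + 1 ≤ r) (y : ℕ) (h0 : 1 ≤ y) :
    KT k (l + 1) lh r (l + 1) (y + 2) - KT k l lh r l (y + 2)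
      = KT k (l + 1) lh r (l + 1) (y + 1) - KT k l lh r l (y + 1) +
      (if KT k l lh r l y + KT k l lh r l (y + 2) < 2 * KT k l lh r l (y + 1) ∧
        KT k (l + 1) lh r (l + 1) (y + 1) - KT k l lh r l (y + 1)
          = KT k (l + 1) lh r (l + 1) y - KT k l lh r l y then 1 else 0) := by
  have h1 : (1 : ℤ) ≤ y := by exact_mod_cast h0
  have hyl : l ≤ y * l := by nlinarith
  have hyl' : l + 1 ≤ y * (l + 1) := by nlinarith
  have key := kt_step k l lh r l (y * k) (y * l + 1) (y * lh) hk hl (by omega) hkr le_rfl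
    (by nlinarith)
    (by
      right
      by_cases c1 : k ≤ lh
      · left; exact ⟨c1, by nlinarith⟩
      · right; right; exact ⟨by omega, by omega, by nlinarith⟩)
  have e : ∀ v : ℤ, ∀ s : ℕ, KT k v lh r v s = kt r v lh (s * k) (s * v) (s * lh) :=
    fun v s => rfl
  have e1 : ∀ k : ℤ, ((y + 1 : ℕ) : ℤ) * k = y * k + k := by intro k; push_cast; ring
  have e2 : ∀ k : ℤ, ((y + 2 : ℕ) : ℤ) * k = y * k + 2 * k := by intro k; push_cast; ring
  simp only [e, e1, e2]
  rw [kt_big (r := r) (v := l) (Y := y * k) (Z := y * l) (Z' := y * l + 1),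
    kt_big (r := r) (v := l) (Y := y * k + k) (Z := y * l + l) (Z' := y * l + 1 + l),
    kt_big (r := r) (v := l) (Y := y * k + 2 * k) (Z := y * l + 2 * l)
      (Z' := y * l + 1 + 2 * l),
    kt_big (r := r) (v := l + 1) (Y := y * k) (Z := y * (l + 1)) (Z' := y * l + 1),
    kt_big (r := r) (v := l + 1) (Y := y * k + k) (Z := y * (l + 1) + (l + 1))
      (Z' := y * l + 1 + l),
    kt_big (r := r) (v := l + 1) (Y := y * k + 2 * k) (Z := y * (l + 1) + 2 * (l + 1))
      (Z' := y * l + 1 + 2 * l)]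
  · exact key
  all_goals linarith

lemma KT_diag_one (k l r : ℤ) (hl : 0 ≤ l) (hkr : k + l ≤ r) (hk : 1 ≤ k) :
    KT k l l r l 1 = min (l + k) (2 * l + r) := by
  unfold KT; push_cast; omega

lemma KT_diag_two (k l r : ℤ) (hl : 0 ≤ l) :
    KT k l l r l 2 = min (l + 2 * k) (l + r) := by
  unfold KT; push_cast; omega

lemma KT_diag_big (k l r : ℤ) (hl : 0 ≤ l) (s : ℕ) (hs : 3 ≤ s) :
    KT k l l r l s = min (l + s * k) (2 * l + r) := by
  have h1 : (3 : ℤ) ≤ s := by exact_mod_cast hs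
  have h2 : 3 * l ≤ s * l := by nlinarith
  unfold KT; push_cast; omega

lemma step3B (k l r : ℤ) (hk : 1 ≤ k) (hl : 0 ≤ l) (hkr : k + l + 1 ≤ r)
    (y : ℕ) (h0 : 1 ≤ y) :
    KT k (l + 1) (l + 1) r (l + 1) (y + 2) - KT k l l r l (y + 2)
      = KT k (l + 1) (l + 1) r (l + 1) (y + 1) - KT k l l r l (y + 1) +
      (if KT k l l r l y + KT k l l r l (y + 2) < 2 * KT k l l r l (y + 1) ∧
        KT k (l + 1) (l + 1) r (l + 1) (y + 1) - KT k l l r l (y + 1)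
          = KT k (l + 1) (l + 1) r (l + 1) y - KT k l l r l y then 1 else 0) := by
  match y, h0 with
  | 1, _ =>
    rw [KT_diag_one k l r hl (by omega) hk, KT_diag_one k (l + 1) r (by omega) (by omega) hk,
      KT_diag_two k l r hl, KT_diag_two k (l + 1) r (by omega),
      KT_diag_big k l r hl _ (by omega), KT_diag_big k (l + 1) r (by omega) _ (by omega)]
    push_cast
    split_ifs <;> omega
  | 2, _ =>
    rw [KT_diag_two k l r hl, KT_diag_two k (l + 1) r (by omega),
      KT_diag_big k l r hl _ (by omega), KT_diag_big k (l + 1) r (by omega) _ (by omega),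
      KT_diag_big k l r hl _ (by omega), KT_diag_big k (l + 1) r (by omega) _ (by omega)]
    push_cast
    split_ifs <;> omega
  | (y + 3), _ =>
    rw [KT_diag_big k l r hl _ (by omega), KT_diag_big k (l + 1) r (by omega) _ (by omega),
      KT_diag_big k l r hl _ (by omega), KT_diag_big k (l + 1) r (by omega) _ (by omega),
      KT_diag_big k l r hl _ (by omega), KT_diag_big k (l + 1) r (by omega) _ (by omega)]
    have e1 : ((y + 3 + 1 : ℕ) : ℤ) * k = y * k + 4 * k := by push_cast; ring
    have e2 : ((y + 3 + 2 : ℕ) : ℤ) * k = y * k + 5 * k := by push_cast; ring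
    have e3 : ((y + 3 : ℕ) : ℤ) * k = y * k + 3 * k := by push_cast; ring
    rw [e1, e2, e3]
    generalize (y : ℤ) * k = Y
    split_ifs <;> omega

lemma step3 (k l r : ℤ) (hk : 1 ≤ k) (hl : 0 ≤ l) (hkr : k + 1 ≤ r) (y : ℕ) :
    KT k (l + 1) (min (l + 1) (r - k)) r (l + 1) (y + 2) - KT k l (min l (r - k)) r l (y + 2)
      = KT k (l + 1) (min (l + 1) (r - k)) r (l + 1) (y + 1)
          - KT k l (min l (r - k)) r l (y + 1) +
      (if KT k l (min l (r - k)) r l y + KT k l (min l (r - k)) r l (y + 2)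
          < 2 * KT k l (min l (r - k)) r l (y + 1) ∧
        KT k (l + 1) (min (l + 1) (r - k)) r (l + 1) (y + 1)
          - KT k l (min l (r - k)) r l (y + 1)
          = KT k (l + 1) (min (l + 1) (r - k)) r (l + 1) y
            - KT k l (min l (r - k)) r l y then 1 else 0) := by
  rcases Nat.eq_zero_or_pos y with h0 | h0
  · subst h0
    unfold KT
    push_cast
    by_cases c : l + 1 ≤ r - k
    · rw [min_eq_left c, min_eq_left (by omega : l ≤ r - k)]
      rw [if_neg] <;> omega
    · rw [min_eq_right (by omega : r - k ≤ l + 1), min_eq_right (by omega : r - k ≤ l)]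
      rw [if_neg] <;> omega
  · by_cases c : l + 1 ≤ r - k
    · rw [min_eq_left c, min_eq_left (by omega : l ≤ r - k)]
      exact step3B k l r hk hl (by omega) y h0
    · rw [min_eq_right (by omega : r - k ≤ l + 1), min_eq_right (by omega : r - k ≤ l)]
      exact step3A k l (r - k) r hk (by omega) rfl (by omega) hkr y h0

/-- First stage: the code `β^k α`. -/
lemma stage1 (k : ℕ) : ∀ P : Multiset ℕ, HasCode P (List.replicate k true ++ [false]) →
    ∀ s, (Kf P s : ℤ) = K1 k s := by
  induction k with
  | zero =>
    intro P h s
    have := HasCode.nil (b := false) (by simpa using h)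
    subst this
    simp [Kf, K1]
  | succ k ih =>
    intro P h
    rw [List.replicate_succ, List.cons_append] at h
    obtain ⟨h1, h2⟩ := h.cons (by simp)
    refine Kf_step P (K1 k) _ (ih _ h1) true h2 (by simp [K1]) (by simp [K1]) ?_
    intro y
    push_cast
    exact step1 k y

/-- Second stage: the code `α^m β^k α`. -/
lemma stage2 (k : ℕ) (hk : 1 ≤ k) (m : ℕ) : ∀ P : Multiset ℕ,
    HasCode P (List.replicate m false ++ (List.replicate k true ++ [false])) →
    ∀ s, (Kf P s : ℤ) = K2 k (k + m) s := by
  induction m with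
  | zero =>
    intro P h s
    rw [stage1 k P (by simpa using h) s]
    unfold K1 K2
    split_ifs with h0
    · subst h0; simp
    · have h1 : (1 : ℤ) ≤ s := by exact_mod_cast Nat.pos_of_ne_zero h0
      have h2 : (1 : ℤ) ≤ k := by exact_mod_cast hk
      rw [min_eq_right] <;> push_cast <;> nlinarith
  | succ m ih =>
    intro P h
    rw [List.replicate_succ, List.cons_append] at h
    obtain ⟨h1, h2⟩ := h.cons (by simp)
    refine Kf_step P (K2 k (k + m)) _ (ih _ h1) false h2 ?_ ?_ ?_
    · simp [K2]; omega
    · simp [K2]; omega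
    · intro y
      push_cast
      rw [← add_assoc]
      exact step2 k (k + m) (by exact_mod_cast hk) y

/-- Third stage: the code `β^l α^m β^k α`. -/
lemma stage3 (k : ℕ) (hk : 1 ≤ k) (m : ℕ) (hm : 1 ≤ m) (l : ℕ) : ∀ P : Multiset ℕ,
    HasCode P (List.replicate l true ++ (List.replicate m false ++
      (List.replicate k true ++ [false]))) →
    ∀ s, (Kf P s : ℤ) = KT k l (min (l : ℤ) ((k + m : ℤ) - k)) (k + m) l s := by
  induction l with
  | zero =>
    intro P h s
    rw [stage2 k hk m P (by simpa using h) s]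
    have : min ((0 : ℕ) : ℤ) ((k + m : ℤ) - k) = 0 := by omega
    rw [this]
    unfold K2 KT
    rw [mul_comm]
    generalize (s : ℤ) * k = Y
    simp
  | succ l ih =>
    intro P h
    rw [List.replicate_succ, List.cons_append] at h
    obtain ⟨h1, h2⟩ := h.cons (by simp)
    refine Kf_step P _ _ (ih _ h1) true h2 ?_ ?_ ?_
    · simp only [KT]; push_cast; omega
    · simp only [KT, if_true]; push_cast; omega
    · intro y
      push_cast
      exact step3 k l (k + m) (by exact_mod_cast hk) (by positivity) (by omega) y

/-- Fourth stage. -/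
lemma stage4 (k : ℕ) (hk : 1 ≤ k) (m : ℕ) (hm : 1 ≤ m) (l : ℕ) (hl : 1 ≤ l) (n : ℕ) :
    ∀ P : Multiset ℕ,
    HasCode P (List.replicate n false ++ (List.replicate l true ++ (List.replicate m false ++
      (List.replicate k true ++ [false])))) →
    ∀ s, (Kf P s : ℤ) = KT k l (min (l : ℤ) ((k + m : ℤ) - k)) (k + m) (l + n) s := by
  induction n with
  | zero =>
    intro P h s
    rw [stage3 k hk m hm l P (by simpa using h) s]
    simp
  | succ n ih =>
    intro P h
    rw [List.replicate_succ, List.cons_append] at h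
    obtain ⟨h1, h2⟩ := h.cons (by simp)
    refine Kf_step P _ _ (ih _ h1) false h2 ?_ ?_ ?_
    · simp only [KT]; push_cast; omega
    · simp only [KT]; push_cast; norm_num; omega
    · intro y
      push_cast
      rw [← add_assoc]
      exact step4 k l _ (k + m) (l + n) (by exact_mod_cast hk) (by exact_mod_cast hl) rfl
        (by omega) (by omega) y

/-- The corank function of the partition with the given code. -/
lemma Kf_of_code (u r k l : ℕ) (hru : r < u) (hk1 : 1 ≤ k) (hk2 : k ≤ r - 1)
    (hl1 : 1 ≤ l) (hl2 : l ≤ u - r)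
    (P : Multiset ℕ) (hPpos : 0 ∉ P)
    (hcode : burgeCode P =
      List.replicate (u - r - l) false ++ List.replicate l true ++
        List.replicate (r - k) false ++ List.replicate k true ++ [false]) (s : ℕ) :
    (((P.map fun p => min p s).sum : ℕ) : ℤ) = KT k l (min (l : ℤ) (r - k)) r (u - r) s := by
  have h : HasCode P (List.replicate (u - r - l) false ++ (List.replicate l true ++
      (List.replicate (r - k) false ++ (List.replicate k true ++ [false])))) := by
    refine ⟨hPpos, P.sum + 1, by omega, ?_⟩
    rw [← burgeCode, hcode]
    simp
  have := stage4 k hk1 (r - k) (by omega) l hl1 (u - r - l) P h s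
  rw [show (k + (r - k : ℕ) : ℤ) = r by omega, show (l + (u - r - l : ℕ) : ℤ) = u - r by omega]
    at this
  exact this

end BurgeStages

noncomputable section Corank

variable {F : Type*} [Field F]

/-- The projection `F[t]² → V`. -/
def piV (F : Type*) [Field F] (u r : ℕ) :
    (F[X] × F[X]) →ₗ[F] (PQ F u × PQ F (u - r)) :=
  LinearMap.prodMap (LinearMap.restrictScalars F (Submodule.mkQ (Ideal.span {(X : F[X]) ^ u})))
    (LinearMap.restrictScalars F (Submodule.mkQ (Ideal.span {(X : F[X]) ^ (u - r)})))

lemma piV_surj (u r : ℕ) : Function.Surjective (piV F u r) := by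
  rintro ⟨x, y⟩
  obtain ⟨x, rfl⟩ := Submodule.mkQ_surjective _ x
  obtain ⟨y, rfl⟩ := Submodule.mkQ_surjective _ y
  exact ⟨(x, y), rfl⟩

lemma piV_ker (u r : ℕ) (x y : F[X]) :
    piV F u r (x, y) = 0 ↔ (X : F[X]) ^ u ∣ x ∧ (X : F[X]) ^ (u - r) ∣ y := by
  have : piV F u r (x, y) = (Submodule.Quotient.mk x, Submodule.Quotient.mk y) := rfl
  rw [this, Prod.mk_eq_zero, Submodule.Quotient.mk_eq_zero, Submodule.Quotient.mk_eq_zero,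
    Ideal.mem_span_singleton, Ideal.mem_span_singleton]

lemma Mmap_piV (u r : ℕ) (hru : r ≤ u) (a g h b x y : F[X]) :
    Mmap F u r hru a g h b (piV F u r (x, y)) =
      piV F u r (a * x + X ^ r * g * y, h * x + b * y) := rfl

/-- The pair `(A_s, p_s)`. -/
def ap (a b t : F[X]) : ℕ → F[X] × F[X]
  | 0 => (1, 0)
  | s + 1 => (a * (ap a b t s).1 + t * (ap a b t s).2, (ap a b t s).1 + b * (ap a b t s).2)

/-- `A_s`. -/
def Aq (a b t : F[X]) (s : ℕ) : F[X] := (ap a b t s).1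
/-- `p_s`. -/
def pq (a b t : F[X]) (s : ℕ) : F[X] := (ap a b t s).2
/-- `B_s`. -/
def Bq (a b t : F[X]) (s : ℕ) : F[X] := Aq a b t s - (a - b) * pq a b t s

lemma Aq_zero (a b t : F[X]) : Aq a b t 0 = 1 := rfl
lemma pq_zero (a b t : F[X]) : pq a b t 0 = 0 := rfl
lemma Bq_zero (a b t : F[X]) : Bq a b t 0 = 1 := by simp [Bq, Aq_zero, pq_zero]
lemma Aq_succ (a b t : F[X]) (s : ℕ) :
    Aq a b t (s + 1) = a * Aq a b t s + t * pq a b t s := rfl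
lemma pq_succ (a b t : F[X]) (s : ℕ) :
    pq a b t (s + 1) = Aq a b t s + b * pq a b t s := rfl
lemma pq_succ' (a b t : F[X]) (s : ℕ) :
    pq a b t (s + 1) = a * pq a b t s + Bq a b t s := by
  rw [pq_succ, Bq]; ring
lemma Bq_succ (a b t : F[X]) (s : ℕ) :
    Bq a b t (s + 1) = t * pq a b t s + b * Bq a b t s := by
  rw [Bq, Aq_succ, pq_succ, Bq]; ring

lemma det_q (a b t : F[X]) (s : ℕ) :
    Aq a b t s * Bq a b t s - t * pq a b t s ^ 2 = (a * b - t) ^ s := by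
  induction s with
  | zero => simp [Aq_zero, pq_zero, Bq_zero]
  | succ s ih =>
    rw [pow_succ (a * b - t), ← ih, Aq_succ, Bq_succ, pq_succ, Bq]
    ring

lemma Mmap_pow (u r : ℕ) (hru : r ≤ u) (a g h b : F[X]) (s : ℕ) (x y : F[X]) :
    (Mmap F u r hru a g h b ^ s : Module.End F _) (piV F u r (x, y)) =
      piV F u r (Aq a b (X ^ r * g * h) s * x + X ^ r * g * pq a b (X ^ r * g * h) s * y,
        h * pq a b (X ^ r * g * h) s * x + Bq a b (X ^ r * g * h) s * y) := by
  induction s with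
  | zero => simp [Aq_zero, pq_zero, Bq_zero]
  | succ s ih =>
    rw [pow_succ', Module.End.mul_apply, ih, Mmap_piV]
    congr 1
    refine Prod.ext ?_ ?_
    · simp only [Aq_succ, pq_succ, Bq]; ring
    · simp only [Bq_succ, pq_succ]; ring

/-- A finite colength submodule of `F[t]²` containing powers of `t`. -/
lemma colength (S : Submodule F[X] (F[X] × F[X])) (u v : ℕ) (h1 : ((X : F[X]) ^ u, (0 : F[X])) ∈ S)
    (h2 : ((0 : F[X]), (X : F[X]) ^ v) ∈ S) :
    (∀ x ∈ S, ∀ y ∈ S, (X : F[X]) ^ (Module.finrank F ((F[X] × F[X]) ⧸ S)) ∣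
      x.1 * y.2 - x.2 * y.1) ∧
    ∃ x ∈ S, ∃ y ∈ S, (X : F[X]) ^ (Module.finrank F ((F[X] × F[X]) ⧸ S)) =
      x.1 * y.2 - x.2 * y.1 := by
  obtain ⟨e, he⟩ : ∃ e, Submodule.map (LinearMap.fst F[X] F[X] F[X]) S =
      Ideal.span {(X : F[X]) ^ e} := by
    obtain ⟨p, hp⟩ := (IsPrincipalIdealRing.principal
      (Submodule.map (LinearMap.fst F[X] F[X] F[X]) S : Ideal F[X])).principal
    have : (X : F[X]) ^ u ∈ (Submodule.map (LinearMap.fst F[X] F[X] F[X]) S : Ideal F[X]) :=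
      ⟨_, h1, rfl⟩
    rw [hp] at this
    obtain ⟨e, _, h⟩ := (dvd_prime_pow prime_X u).1 (Ideal.mem_span_singleton.1 this)
    exact ⟨e, hp.trans (Ideal.span_singleton_eq_span_singleton.2 h)⟩
  obtain ⟨f, hf⟩ : ∃ f, Submodule.comap (LinearMap.inr F[X] F[X] F[X]) S =
      Ideal.span {(X : F[X]) ^ f} := by
    obtain ⟨p, hp⟩ := (IsPrincipalIdealRing.principal
      (Submodule.comap (LinearMap.inr F[X] F[X] F[X]) S : Ideal F[X])).principal
    have : (X : F[X]) ^ v ∈ (Submodule.comap (LinearMap.inr F[X] F[X] F[X]) S : Ideal F[X]) :=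
      h2
    rw [hp] at this
    obtain ⟨e, _, h⟩ := (dvd_prime_pow prime_X v).1 (Ideal.mem_span_singleton.1 this)
    exact ⟨e, hp.trans (Ideal.span_singleton_eq_span_singleton.2 h)⟩
  have hfst : ∀ x ∈ S, (X : F[X]) ^ e ∣ x.1 := fun x hx => by
    rw [← Ideal.mem_span_singleton, ← he]
    exact ⟨x, hx, rfl⟩
  have hsnd : ∀ y : F[X], ((0 : F[X]), y) ∈ S ↔ (X : F[X]) ^ f ∣ y := fun y => by
    rw [← Ideal.mem_span_singleton, ← hf]
    rfl
  obtain ⟨z, hz, hz1⟩ : ∃ z ∈ S, z.1 = (X : F[X]) ^ e := by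
    have : (X : F[X]) ^ e ∈ (Submodule.map (LinearMap.fst F[X] F[X] F[X]) S : Ideal F[X]) := by
      rw [he]; exact Ideal.mem_span_singleton_self _
    obtain ⟨z, hz, h⟩ := this
    exact ⟨z, hz, h⟩
  have hc : Module.finrank F ((F[X] × F[X]) ⧸ S) = e + f := by
    let ι : (F[X] ⧸ Ideal.span {(X : F[X]) ^ f}) →ₗ[F[X]] ((F[X] × F[X]) ⧸ S) :=
      Submodule.mapQ _ _ (LinearMap.inr F[X] F[X] F[X]) hf.ge
    let κ : ((F[X] × F[X]) ⧸ S) →ₗ[F[X]] (F[X] ⧸ Ideal.span {(X : F[X]) ^ e}) :=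
      Submodule.mapQ _ _ (LinearMap.fst F[X] F[X] F[X])
        (by rw [← he]; exact Submodule.le_comap_map _ _)
    have hι : Function.Injective ι := by
      rw [← LinearMap.ker_eq_bot, LinearMap.ker_eq_bot']
      intro m hm
      obtain ⟨m, rfl⟩ := Submodule.mkQ_surjective _ m
      have : (Submodule.Quotient.mk ((0 : F[X]), m) : (F[X] × F[X]) ⧸ S) = 0 := hm
      rw [Submodule.Quotient.mk_eq_zero, hsnd] at this
      exact (Submodule.Quotient.mk_eq_zero _).2 (Ideal.mem_span_singleton.2 this)
    have hκ : Function.Surjective κ := by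
      intro m
      obtain ⟨m, rfl⟩ := Submodule.mkQ_surjective _ m
      exact ⟨Submodule.Quotient.mk (m, 0), rfl⟩
    have hex : Function.Exact ι κ := by
      intro y
      obtain ⟨y, rfl⟩ := Submodule.mkQ_surjective _ y
      constructor
      · intro h
        have h' : (Submodule.Quotient.mk y.1 : F[X] ⧸ Ideal.span {(X : F[X]) ^ e}) = 0 := h
        rw [Submodule.Quotient.mk_eq_zero, Ideal.mem_span_singleton] at h'
        obtain ⟨w, hw⟩ := h'
        refine ⟨Submodule.Quotient.mk (y.2 - w * z.2), ?_⟩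
        change (Submodule.Quotient.mk ((0 : F[X]), y.2 - w * z.2) : (F[X] × F[X]) ⧸ S)
          = Submodule.Quotient.mk y
        rw [Submodule.Quotient.eq]
        have : ((0 : F[X]), y.2 - w * z.2) - y = (-w) • z := by
          refine Prod.ext ?_ ?_
          · simp [hz1, hw, mul_comm]
          · simp
        rw [this]
        exact S.smul_mem _ hz
      · rintro ⟨m, hm⟩
        rw [← hm]
        obtain ⟨m, rfl⟩ := Submodule.mkQ_surjective _ m
        change (Submodule.Quotient.mk (0 : F[X]) : F[X] ⧸ Ideal.span {(X : F[X]) ^ e}) = 0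
        simp
    have fe : Module.finrank F (F[X] ⧸ Ideal.span {(X : F[X]) ^ e}) = e := by
      rw [finrank_quotient_span_eq_natDegree]; simp
    have ff : Module.finrank F (F[X] ⧸ Ideal.span {(X : F[X]) ^ f}) = f := by
      rw [finrank_quotient_span_eq_natDegree]; simp
    have me : Module.Finite F (F[X] ⧸ Ideal.span {(X : F[X]) ^ e}) :=
      (monic_X_pow e).finite_quotient
    have mf : Module.Finite F (F[X] ⧸ Ideal.span {(X : F[X]) ^ f}) :=
      (monic_X_pow f).finite_quotient
    have mS : Module.Finite F ((F[X] × F[X]) ⧸ S) := by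
      exact Module.Finite.of_exact (f := ι.restrictScalars F) (g := κ.restrictScalars F) hex hκ
    have e1 := (κ.restrictScalars F).finrank_range_add_finrank_ker
    have e2 : LinearMap.ker (κ.restrictScalars F) = LinearMap.range (ι.restrictScalars F) :=
      Function.Exact.linearMap_ker_eq hex
    rw [e2, LinearMap.finrank_range_of_inj (f := ι.restrictScalars F) hι,
      (LinearMap.range_eq_top (f := κ.restrictScalars F)).2 hκ, finrank_top, fe, ff] at e1
    exact e1.symm
  rw [hc]
  refine ⟨?_, z, hz, (0, X ^ f), (hsnd _).2 dvd_rfl, by simp [hz1, pow_add]⟩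
  intro x hx y hy
  obtain ⟨x', hx'⟩ := hfst x hx
  obtain ⟨y', hy'⟩ := hfst y hy
  have : ((0 : F[X]), x' * y.2 - y' * x.2) ∈ S := by
    have : ((0 : F[X]), x' * y.2 - y' * x.2) = x' • y - y' • x := by
      refine Prod.ext ?_ ?_
      · simp [hx', hy']; ring
      · simp
    rw [this]
    exact S.sub_mem (S.smul_mem _ hy) (S.smul_mem _ hx)
  rw [hsnd] at this
  rw [hx', hy', pow_add, show (X : F[X]) ^ e * x' * y.2 - x.2 * (X ^ e * y') =
    X ^ e * (x' * y.2 - y' * x.2) by ring]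
  exact mul_dvd_mul_left _ this


lemma corank (u r : ℕ) (hru : r ≤ u) (a g h b : F[X]) (s c : ℕ)
    (hc : c = Module.finrank F (LinearMap.ker
      (Mmap F u r hru a g h b ^ s : Module.End F (PQ F u × PQ F (u - r)))))
    (t A B p : F[X]) (ht : t = X ^ r * g * h) (hA : A = Aq a b t s)
    (hB : B = Bq a b t s) (hp : p = pq a b t s) :
    ((X : F[X]) ^ c ∣ (a * b - t) ^ s ∧ (X : F[X]) ^ c ∣ A * X ^ (u - r) ∧
      (X : F[X]) ^ c ∣ g * p * X ^ u ∧ (X : F[X]) ^ c ∣ h * p * X ^ u ∧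
      (X : F[X]) ^ c ∣ B * X ^ u) ∧
    ∀ n : ℕ, (X : F[X]) ^ n ∣ (a * b - t) ^ s → (X : F[X]) ^ n ∣ A * X ^ (u - r) →
      (X : F[X]) ^ n ∣ g * p * X ^ u → (X : F[X]) ^ n ∣ h * p * X ^ u →
      (X : F[X]) ^ n ∣ B * X ^ u → n ≤ u + (u - r) → n ≤ c := by
  have hdet := det_q a b t s
  rw [← hA, ← hB, ← hp] at hdet
  set M : Module.End F (PQ F u × PQ F (u - r)) := Mmap F u r hru a g h b ^ s with hM
  have hMp : ∀ x y : F[X], M (piV F u r (x, y)) =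
      piV F u r (A * x + X ^ r * g * p * y, h * p * x + B * y) := by
    intro x y
    rw [hM, Mmap_pow, hA, hB, hp, ht]
  let S : Submodule F[X] (F[X] × F[X]) :=
    { carrier := {x | ∃ w1 w2 z1 z2 : F[X], x.1 = A * w1 + X ^ r * g * p * w2 + X ^ u * z1 ∧
        x.2 = h * p * w1 + B * w2 + X ^ (u - r) * z2}
      add_mem' := by
        rintro x y ⟨w1, w2, z1, z2, h1, h2⟩ ⟨w1', w2', z1', z2', h1', h2'⟩
        refine ⟨w1 + w1', w2 + w2', z1 + z1', z2 + z2', ?_, ?_⟩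
        · rw [Prod.fst_add, h1, h1']; ring
        · rw [Prod.snd_add, h2, h2']; ring
      zero_mem' := ⟨0, 0, 0, 0, by simp, by simp⟩
      smul_mem' := by
        rintro f x ⟨w1, w2, z1, z2, h1, h2⟩
        refine ⟨f * w1, f * w2, f * z1, f * z2, ?_, ?_⟩
        · rw [Prod.smul_fst, h1, smul_eq_mul]; ring
        · rw [Prod.smul_snd, h2, smul_eq_mul]; ring }
  have hS : Submodule.comap (piV F u r) (LinearMap.range M) = S.restrictScalars F := by
    ext ⟨x, y⟩
    constructor
    · rintro ⟨w, hw⟩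
      obtain ⟨⟨w1, w2⟩, rfl⟩ := piV_surj u r w
      rw [hMp, eq_comm, ← sub_eq_zero, ← map_sub] at hw
      obtain ⟨⟨z1, h1⟩, ⟨z2, h2⟩⟩ := (piV_ker u r _ _).1 hw
      refine ⟨w1, w2, z1, z2, ?_, ?_⟩
      · rw [← h1]; simp
      · rw [← h2]; simp
    · rintro ⟨w1, w2, z1, z2, h1, h2⟩
      refine ⟨piV F u r (w1, w2), ?_⟩
      rw [hMp, eq_comm, ← sub_eq_zero, ← map_sub]
      refine (piV_ker u r _ _).2 ⟨⟨z1, ?_⟩, ⟨z2, ?_⟩⟩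
      · simp only at h1; simp [h1]
      · simp only at h2; simp [h2]
  have me : ∀ n : ℕ, Module.Finite F (PQ F n) := fun n => (monic_X_pow n).finite_quotient
  have hcS : Module.finrank F ((F[X] × F[X]) ⧸ S) = c := by
    have e1 := M.finrank_range_add_finrank_ker
    have e2 := (LinearMap.range M).finrank_quotient_add_finrank
    let q : (F[X] × F[X]) →ₗ[F] (_ ⧸ LinearMap.range M) :=
      (LinearMap.range M).mkQ.comp (piV F u r)
    have hq : LinearMap.ker q = S.restrictScalars F := by
      rw [LinearMap.ker_comp, Submodule.ker_mkQ, hS]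
    have hqs : LinearMap.range q = ⊤ :=
      LinearMap.range_eq_top.2 ((Submodule.mkQ_surjective _).comp (piV_surj u r))
    have e3 := (q.quotKerEquivRange).finrank_eq
    rw [hqs, finrank_top, hq] at e3
    have e4 : Module.finrank F ((F[X] × F[X]) ⧸ S) =
      Module.finrank F ((F[X] × F[X]) ⧸ S.restrictScalars F) := rfl
    omega
  obtain ⟨k1, x, hx, y, hy, k2⟩ := colength S u (u - r)
    ⟨0, 0, 1, 0, by simp, by simp⟩ ⟨0, 0, 0, 1, by simp, by simp⟩
  rw [hcS] at k1 k2
  have m1 : (A, h * p) ∈ S := ⟨1, 0, 0, 0, by simp, by simp⟩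
  have m2 : (X ^ r * g * p, B) ∈ S := ⟨0, 1, 0, 0, by simp, by simp⟩
  have m3 : ((X : F[X]) ^ u, (0 : F[X])) ∈ S := ⟨0, 0, 1, 0, by simp, by simp⟩
  have m4 : ((0 : F[X]), (X : F[X]) ^ (u - r)) ∈ S := ⟨0, 0, 0, 1, by simp, by simp⟩
  have hXu : (X : F[X]) ^ u = X ^ r * X ^ (u - r) := by rw [← pow_add]; congr 1; omega
  constructor
  · refine ⟨?_, ?_, ?_, ?_, ?_⟩
    · convert k1 _ m1 _ m2 using 1
      rw [← hdet, ht]; ring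
    · convert k1 _ m1 _ m4 using 1
      ring
    · convert k1 _ m2 _ m4 using 1
      rw [hXu]; ring
    · convert k1 _ m3 _ m1 using 1
      ring
    · convert k1 _ m3 _ m2 using 1
      ring
  · intro n q1 q2 q3 q4 q5 q6
    have : (X : F[X]) ^ n ∣ X ^ c := by
      rw [k2]
      obtain ⟨w1, w2, z1, z2, h1, h2⟩ := hx
      obtain ⟨w1', w2', z1', z2', h1', h2'⟩ := hy
      have q7 : (X : F[X]) ^ n ∣ X ^ u * X ^ (u - r) := by
        rw [← pow_add]; exact pow_dvd_pow _ q6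
      have : x.1 * y.2 - x.2 * y.1 = (a * b - t) ^ s * (w1 * w2' - w2 * w1')
          + A * X ^ (u - r) * (w1 * z2' - z2 * w1')
          + g * p * X ^ u * (w2 * z2' - z2 * w2')
          + h * p * X ^ u * (z1 * w1' - w1 * z1')
          + B * X ^ u * (z1 * w2' - w2 * z1')
          + X ^ u * X ^ (u - r) * (z1 * z2' - z2 * z1') := by
        rw [h1, h2, h1', h2', ← hdet, ht, hXu]
        ring
      rw [this]
      exact dvd_add (dvd_add (dvd_add (dvd_add (dvd_add (q1.mul_right _) (q2.mul_right _))
        (q3.mul_right _)) (q4.mul_right _)) (q5.mul_right _)) (q7.mul_right _)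
    exact (pow_dvd_pow_iff X_ne_zero not_isUnit_X).1 this

end Corank

section Numeric

/-- Data at the first break point `s = q + 2` of the corank function. -/
structure Crit (k l lh r v : ℤ) (K : ℕ → ℤ) (q : ℕ) : Prop where
  k1 : 1 ≤ k
  l1 : 1 ≤ l
  h1 : 1 ≤ lh
  hl : lh ≤ l
  hr : k + lh ≤ r
  lv : l ≤ v
  one : K 1 = k + l
  m0 : K (q + 1) = (q + 1) * (k + l)
  m1 : (q + 1) * l ≤ v
  m2 : K (q + 1) ≤ v + r + (q - 1) * lh
  a1 : K (q + 2) < (q + 2) * (k + l)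
  a2 : K (q + 2) ≤ v + (q + 2) * k
  a3 : K (q + 2) ≤ v + r + q * lh
  a4 : K (q + 2) < 2 * v + r
  a5 : K (q + 2) = v + (q + 2) * k ∨ K (q + 2) = v + r + q * lh
  b1 : K (q + 3) < (q + 3) * (k + l)
  b3 : K (q + 3) ≤ v + r + (q + 1) * lh
  b5 : K (q + 3) = v + (q + 3) * k ∨ K (q + 3) = v + r + (q + 1) * lh ∨ K (q + 3) = 2 * v + r

lemma KT_le (k l lh r v : ℤ) (s : ℕ) : KT k l lh r v s ≤ s * (k + l) ∧
    KT k l lh r v s ≤ v + s * k ∧ KT k l lh r v s ≤ v + r + (s - 2) * lh ∧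
    KT k l lh r v s ≤ 2 * v + r ∧ (KT k l lh r v s = s * (k + l) ∨
     KT k l lh r v s = v + s * k ∨ KT k l lh r v s = v + r + (s - 2) * lh ∨
     KT k l lh r v s = 2 * v + r) := by
  have e1 : (s : ℤ) * (k + l) = s * k + s * l := by ring
  have e2 : v + r + ((s : ℤ) - 2) * lh = v + r + s * lh - 2 * lh := by ring
  rw [e1, e2]
  unfold KT
  omega

lemma crit_exists (k l lh r v : ℤ) (K : ℕ → ℤ) (hK : ∀ s, K s = KT k l lh r v s)
    (k1 : 1 ≤ k) (l1 : 1 ≤ l) (h1 : 1 ≤ lh) (hl : lh ≤ l) (hr : k + lh ≤ r) (lv : l ≤ v) :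
    ∃ q, Crit k l lh r v K q := by
  have hle : ∀ s : ℕ, K s ≤ s * (k + l) ∧
    K s ≤ v + s * k ∧ K s ≤ v + r + (s - 2) * lh ∧
    K s ≤ 2 * v + r ∧ (K s = s * (k + l) ∨
     K s = v + s * k ∨ K s = v + r + (s - 2) * lh ∨
     K s = 2 * v + r) := fun s => by rw [hK s]; exact KT_le k l lh r v s
  have ex : ∃ s, K s < s * (k + l) := by
    refine ⟨(2 * v + r + 1).toNat, ?_⟩
    have := (hle (2 * v + r + 1).toNat).2.2.2.1
    have e : (((2 * v + r + 1).toNat : ℕ) : ℤ) = 2 * v + r + 1 := by omega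
    rw [e]
    nlinarith
  classical
  have one : K 1 = k + l := by rw [hK, KT]; push_cast; omega
  have zero : K 0 = 0 := by rw [hK, KT]; push_cast; omega
  obtain ⟨s, hs, hmin⟩ : ∃ s, K s < s * (k + l) ∧ ∀ m < s, K m = m * (k + l) :=
    ⟨Nat.find ex, Nat.find_spec ex, fun m hm => le_antisymm (hle m).1
      (not_lt.1 (Nat.find_min ex hm))⟩
  match s, hs, hmin with
  | 0, hs, _ => simp [zero] at hs
  | 1, hs, _ => simp [one] at hs
  | q + 2, hs, hmin =>
    have m0 := hmin (q + 1) (by omega)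
    have H1 := hle (q + 1)
    obtain ⟨a1, a2, a3, a4, a5⟩ := hle (q + 2)
    obtain ⟨b1, b2, b3, b4, b5⟩ := hle (q + 3)
    have hq : (0 : ℤ) ≤ q := by positivity
    push_cast at *
    have m1 : ((q : ℤ) + 1) * l ≤ v := by linarith
    have qh : (q : ℤ) * lh ≤ q * l := by nlinarith
    have a4' : K (q + 2) < 2 * v + r := by
      rcases a4.lt_or_eq with h | h
      · exact h
      · nlinarith
    have b1' : K (q + 3) < (q + 3) * (k + l) := by
      rcases a5 with h | h | h | h
      · linarith
      · nlinarith
      · nlinarith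
      · linarith
    refine ⟨q, k1, l1, h1, hl, hr, lv, one, m0, m1, by linarith, hs, a2, by linarith, a4', ?_, b1',
      by linarith, ?_⟩
    · rcases a5 with h | h | h | h
      · linarith
      · left; exact h
      · right; linarith
      · linarith
    · rcases b5 with h | h | h | h
      · linarith
      · left; exact h
      · right; left; linarith
      · right; right; exact h

lemma numX {k l lh r v i j : ℤ} {K : ℕ → ℤ} {q : ℕ} (C : Crit k l lh r v K q)
    (hij : i ≤ j) (hir : 2 * i < r) (hs : k + lh ≤ i + j)
    (up : ∀ s : ℕ, K s ≤ v + s * i)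
    (lo : ∀ s : ℕ, s * (k + l) ≤ K s ∨ v + s * i ≤ K s ∨ 2 * v + r ≤ K s) :
    k ≤ i ∧ lh ≤ j := by
  obtain ⟨k1, l1, h1, hl, hr, lv, one, m0, m1, m2, a1, a2, a3, a4, a5, b1, b3, b5⟩ := C
  have u1 := up (q + 1)
  have u2 := up (q + 2)
  have l2 := lo (q + 2)
  have l3 := lo (q + 3)
  have hq : (0 : ℤ) ≤ q := by positivity
  push_cast at *
  have e : K (q + 2) = v + (q + 2) * i := by
    rcases l2 with h | h | h
    · linarith
    · linarith
    · linarith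
  by_cases c : k ≤ i
  · have : i ≤ k := by nlinarith
    exact ⟨c, by linarith⟩
  · exfalso
    have c' : i + 1 ≤ k := by omega
    have e2 : K (q + 2) = v + r + q * lh := by
      rcases a5 with h | h
      · nlinarith
      · exact h
    rcases l3 with h | h | h
    · linarith
    · have : i ≤ lh := by linarith
      have : (q : ℤ) * i ≤ q * lh := by nlinarith
      linarith
    · have h5 : v ≤ (q + 1) * lh := by linarith
      have h6 : ((q : ℤ) + 1) * (k + l) ≤ (q + 1) * (lh + i) := by linarith
      have := le_of_mul_le_mul_left h6 (by linarith)
      linarith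

lemma numY1 {k l lh r v i j φ : ℤ} {K : ℕ → ℤ} {q : ℕ} (C : Crit k l lh r v K q)
    (hij : j < i) (hjr : 2 * j < r) (hs : k + lh ≤ i + j) (hφ : 0 ≤ φ) (cj : lh ≤ j)
    (u1 : i < k → K 1 ≤ v + i)
    (lo : ∀ s : ℕ, (s + 2) * (k + l) ≤ K (s + 2) ∨ v + (s + 2) * i ≤ K (s + 2) ∨
      v + r + φ + s * j ≤ K (s + 2) ∨ 2 * v + r ≤ K (s + 2))
    (up1 : ∀ s : ℕ, (s + 2) * i < r + s * j → K (s + 2) ≤ v + (s + 2) * i)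
    (up2 : ∀ s : ℕ, r + φ + s * j < (s + 2) * i → K (s + 2) ≤ v + r + φ + s * j) :
    k ≤ i := by
  obtain ⟨k1, l1, h1, hl, hr, lv, one, m0, m1, m2, a1, a2, a3, a4, a5, b1, b3, b5⟩ := C
  clear hjr up2 b5
  have l2 := lo q
  have l3 := lo (q + 1)
  have up12 := up1 q
  clear lo
  by_contra ci
  have ci' : i + 1 ≤ k := by omega
  have cj' : lh + 1 ≤ j := by omega
  have u1' := u1 (by omega)
  clear u1
  match q with
  | 0 =>
    clear up1
    norm_num at *
    by_cases c : 2 * i < r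
    · have := up12 (by linarith)
      rcases a5 with h | h <;> linarith
    · rcases l3 with h | h | h | h
      · linarith
      · linarith
      · linarith
      · linarith
  | w + 1 =>
    have up11 := up1 w
    clear up1
    have hw : (0 : ℤ) ≤ w := by positivity
    push_cast at *
    rw [show w + 1 + 2 = w + 3 from rfl] at *
    rw [show w + 1 + 1 = w + 2 from rfl] at m0 m2
    rw [show w + 1 + 3 = w + 4 from rfl] at b1 b3
    rw [show w + 1 + 1 + 2 = w + 4 from rfl] at l3
    have p1 : ((w : ℤ) + 1) * (lh + 1) ≤ (w + 1) * j :=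
      mul_le_mul_of_nonneg_left cj' (by linarith)
    have p2 : ((w : ℤ) + 1 + 2) * (i + 1) ≤ (w + 1 + 2) * k :=
      mul_le_mul_of_nonneg_left ci' (by linarith)
    have f1 : v + (w + 1 + 2) * i ≤ K (w + 3) := by
      rcases l2 with h | h | h | h
      · linarith
      · exact h
      · linarith
      · linarith
    have f2 := up12 (by linarith)
    have f3 : K (w + 3) = v + r + (w + 1) * lh := by
      rcases a5 with h | h
      · linarith
      · exact h
    have f4 := up11 (by linarith)
    have f5 : ((w : ℤ) + 1 + 1) * (l + 1) ≤ v := by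
      have : ((w : ℤ) + 2) * (l + 1) ≤ (w + 2) * (k + l - i) :=
        mul_le_mul_of_nonneg_left (by linarith) (by linarith)
      linarith
    have f6 : ((w : ℤ) + 1 + 1) * lh ≤ (w + 1 + 1) * l :=
      mul_le_mul_of_nonneg_left hl (by linarith)
    have f7 : ((w : ℤ) + 1 + 1) * (lh + 1) ≤ (w + 1 + 1) * j :=
      mul_le_mul_of_nonneg_left cj' (by linarith)
    rcases l3 with h | h | h | h
    · linarith
    · linarith
    · linarith
    · linarith

lemma numY2 {k l lh r v i j φ : ℤ} {K : ℕ → ℤ} {q : ℕ} (C : Crit k l lh r v K q)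
    (hij : j < i) (hjr : 2 * j < r) (hs : k + lh ≤ i + j) (hφ : 0 ≤ φ)
    (u1 : i < k → K 1 ≤ v + i)
    (lo : ∀ s : ℕ, (s + 2) * (k + l) ≤ K (s + 2) ∨ v + (s + 2) * i ≤ K (s + 2) ∨
      v + r + φ + s * j ≤ K (s + 2) ∨ 2 * v + r ≤ K (s + 2))
    (up1 : ∀ s : ℕ, (s + 2) * i < r + s * j → K (s + 2) ≤ v + (s + 2) * i)
    (up2 : ∀ s : ℕ, r + φ + s * j < (s + 2) * i → K (s + 2) ≤ v + r + φ + s * j) :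
    lh ≤ j := by
  obtain ⟨k1, l1, h1, hl, hr, lv, one, m0, m1, m2, a1, a2, a3, a4, a5, b1, b3, b5⟩ := C
  clear u1 up1 a5 m0 m2
  have l2 := lo q
  have up23 := up2 (q + 1)
  have up22 := up2 q
  clear lo up2
  have hq : (0 : ℤ) ≤ q := by positivity
  push_cast at *
  rw [show q + 1 + 2 = q + 3 from rfl] at up23
  by_contra cj
  have ci : k + 1 ≤ i := by omega
  have p1 : ((q : ℤ) + 2) * (k + 1) ≤ (q + 2) * i :=
    mul_le_mul_of_nonneg_left ci (by linarith)
  have f1 : v + r + φ + q * j ≤ K (q + 2) := by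
    rcases l2 with h | h | h | h
    · linarith
    · linarith
    · exact h
    · linarith
  have f2 := up22 (by linarith)
  have f3 := up23 (by linarith)
  rcases b5 with h | h | h
  · have h1 : k ≤ j := by linarith
    have : (q : ℤ) * k ≤ q * j := mul_le_mul_of_nonneg_left h1 hq
    linarith
  · linarith
  · have : ((q : ℤ) + 1) * lh ≤ (q + 1) * l := mul_le_mul_of_nonneg_left hl (by linarith)
    linarith

lemma numY {k l lh r v i j φ : ℤ} {K : ℕ → ℤ} {q : ℕ} (C : Crit k l lh r v K q)
    (hij : j < i) (hjr : 2 * j < r) (hs : k + lh ≤ i + j) (hφ : 0 ≤ φ)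
    (u1 : i < k → K 1 ≤ v + i)
    (lo : ∀ s : ℕ, (s + 2) * (k + l) ≤ K (s + 2) ∨ v + (s + 2) * i ≤ K (s + 2) ∨
      v + r + φ + s * j ≤ K (s + 2) ∨ 2 * v + r ≤ K (s + 2))
    (up1 : ∀ s : ℕ, (s + 2) * i < r + s * j → K (s + 2) ≤ v + (s + 2) * i)
    (up2 : ∀ s : ℕ, r + φ + s * j < (s + 2) * i → K (s + 2) ≤ v + r + φ + s * j) :
    k ≤ i ∧ lh ≤ j := by
  have h := numY2 C hij hjr hs hφ u1 lo up1 up2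
  exact ⟨numY1 C hij hjr hs hφ h u1 lo up1 up2, h⟩

lemma numZ {k l lh r v i j : ℤ} {K : ℕ → ℤ} {q : ℕ} (C : Crit k l lh r v K q)
    (hi : r ≤ 2 * i) (hj : r ≤ 2 * j)
    (u1 : i < k → K 1 ≤ v + i)
    (lo : ∀ s : ℕ, s * (k + l) ≤ K s ∨ s * r ≤ 2 * (K s - v) ∨ 2 * v + r ≤ K s) :
    k ≤ i ∧ lh ≤ j := by
  obtain ⟨k1, l1, h1, hl, hr, lv, one, m0, m1, m2, a1, a2, a3, a4, a5, b1, b3, b5⟩ := C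
  have l2 := lo (q + 2)
  have l3 := lo (q + 3)
  have hq : (0 : ℤ) ≤ q := by positivity
  push_cast at *
  have f2 : ((q : ℤ) + 2) * r ≤ 2 * (K (q + 2) - v) := by
    rcases l2 with h | h | h
    · linarith
    · exact h
    · linarith
  constructor
  · by_contra c
    have u1' := u1 (by omega)
    rcases l3 with h | h | h
    · linarith
    · have : 2 * lh < r := by linarith
      have : (q : ℤ) * (2 * lh) ≤ q * r := mul_le_mul_of_nonneg_left (by linarith) hq
      linarith
    · have : 2 * lh + 1 ≤ r := by omega
      have : (q : ℤ) * (2 * lh + 1) ≤ q * r := mul_le_mul_of_nonneg_left (by linarith) hq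
      have q0 : (q : ℤ) = 0 := by linarith
      rw [q0] at b3
      linarith
  · by_contra c
    have : 2 * k + 1 ≤ r := by omega
    have : ((q : ℤ) + 2) * (2 * k + 1) ≤ (q + 2) * r :=
      mul_le_mul_of_nonneg_left (by linarith) (by linarith)
    linarith

end Numeric

section Orders

variable {F : Type*} [Field F]

/-- `p` has order of vanishing at zero exactly `n`. -/
def Eo (n : ℕ) (p : F[X]) : Prop := ∃ p' : F[X], p = X ^ n * p' ∧ p'.coeff 0 ≠ 0

lemma Eo.mul {n m : ℕ} {p q : F[X]} (hp : Eo n p) (hq : Eo m q) : Eo (n + m) (p * q) := by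
  obtain ⟨p', rfl, h1⟩ := hp
  obtain ⟨q', rfl, h2⟩ := hq
  refine ⟨p' * q', by ring, ?_⟩
  rw [mul_coeff_zero]
  exact mul_ne_zero h1 h2

lemma Eo.one : Eo 0 (1 : F[X]) := ⟨1, by simp, by simp⟩

lemma Eo.X_pow (n : ℕ) : Eo n (X ^ n : F[X]) := ⟨1, by simp, by simp⟩

lemma Eo.cast {n m : ℕ} {p : F[X]} (hp : Eo n p) (h : n = m) : Eo m p := h ▸ hp

lemma Eo.pow {n : ℕ} {p : F[X]} (hp : Eo n p) (s : ℕ) : Eo (s * n) (p ^ s) := by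
  induction s with
  | zero => simpa using (Eo.one : Eo 0 (1 : F[X]))
  | succ s ih => rw [pow_succ]; exact (ih.mul hp).cast (by ring)

lemma Eo.add {n : ℕ} {p q : F[X]} (hp : Eo n p) (hq : X ^ (n + 1) ∣ q) : Eo n (p + q) := by
  obtain ⟨p', rfl, h1⟩ := hp
  obtain ⟨q', rfl⟩ := hq
  exact ⟨p' + X * q', by ring, by simpa using h1⟩

lemma Eo.add' {n : ℕ} {p q : F[X]} (hp : Eo n p) (hq : X ^ (n + 1) ∣ q) : Eo n (q + p) := by
  rw [add_comm]; exact hp.add hq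

lemma Eo.dvd {n : ℕ} {p : F[X]} (hp : Eo n p) : X ^ n ∣ p := by
  obtain ⟨p', rfl, h1⟩ := hp
  exact Dvd.intro _ rfl

lemma Eo.le {n m : ℕ} {p : F[X]} (hp : Eo n p) (h : X ^ m ∣ p) : m ≤ n := by
  obtain ⟨p', rfl, h1⟩ := hp
  by_contra hlt
  have := (X_pow_dvd_iff.mp h) n (by omega)
  rw [← zero_add n, coeff_X_pow_mul', ] at this
  simp at this
  exact h1 (by simpa using this)

lemma exists_order (p : F[X]) (N : ℕ) : ∃ n ≤ N, X ^ n ∣ p ∧ (n < N → Eo n p) := by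
  induction N with
  | zero => exact ⟨0, le_rfl, by simp, by simp⟩
  | succ N ih =>
    obtain ⟨n, h1, h2, h3⟩ := ih
    by_cases hn : n < N
    · exact ⟨n, by omega, h2, fun _ => h3 hn⟩
    · have : n = N := by omega
      subst this
      obtain ⟨p', hp'⟩ := h2
      by_cases h0 : p'.coeff 0 = 0
      · refine ⟨n + 1, le_rfl, ?_, by simp⟩
        obtain ⟨q, rfl⟩ := X_dvd_iff.mpr h0
        exact ⟨q, by rw [hp']; ring⟩
      · exact ⟨n, by omega, ⟨p', hp'⟩, fun _ => ⟨p', hp', h0⟩⟩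

lemma dm {m n k : ℕ} {p q : F[X]} (hp : X ^ m ∣ p) (hq : X ^ n ∣ q) (h : k ≤ m + n) :
    X ^ k ∣ p * q :=
  (pow_dvd_pow X h).trans (by rw [pow_add]; exact mul_dvd_mul hp hq)

lemma dle {m k : ℕ} {p : F[X]} (hp : X ^ m ∣ p) (h : k ≤ m) : X ^ k ∣ p :=
  (pow_dvd_pow X h).trans hp

lemma dpow {m : ℕ} {p : F[X]} (hp : X ^ m ∣ p) (s : ℕ) : X ^ (s * m) ∣ p ^ s := by
  rw [mul_comm, pow_mul]; exact pow_dvd_pow_of_dvd hp s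

/-- Corank description of the powers. -/
def Cor (v r : ℕ) (a g h b : F[X]) (c : ℕ → ℕ) : Prop :=
  ∀ s, (X ^ c s ∣ (a * b - X ^ r * g * h) ^ s ∧ X ^ c s ∣ Aq a b (X ^ r * g * h) s * X ^ v ∧
    X ^ c s ∣ g * pq a b (X ^ r * g * h) s * X ^ (r + v) ∧
    X ^ c s ∣ h * pq a b (X ^ r * g * h) s * X ^ (r + v) ∧
    X ^ c s ∣ Bq a b (X ^ r * g * h) s * X ^ (r + v)) ∧
    ∀ n, X ^ n ∣ (a * b - X ^ r * g * h) ^ s → X ^ n ∣ Aq a b (X ^ r * g * h) s * X ^ v →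
      X ^ n ∣ g * pq a b (X ^ r * g * h) s * X ^ (r + v) →
      X ^ n ∣ h * pq a b (X ^ r * g * h) s * X ^ (r + v) →
      X ^ n ∣ Bq a b (X ^ r * g * h) s * X ^ (r + v) → n ≤ r + v + v → n ≤ c s

lemma t_dvd (r : ℕ) (g h : F[X]) : X ^ r ∣ X ^ r * g * h := ⟨g * h, by ring⟩

lemma ordX {v r i : ℕ} {a g h b : F[X]} {c : ℕ → ℕ} (C : Cor v r a g h b c) {d : ℕ}
    (hd : X ^ d ∣ a * b - X ^ r * g * h) (ha : Eo i a) (hb : X ^ i ∣ b) (hir : 2 * i < r)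
    (s : ℕ) :
    c s ≤ v + s * i ∧ (s * d ≤ c s ∨ v + s * i ≤ c s ∨ r + v + v ≤ c s) := by
  have key : ∀ s, Eo (s * i) (Aq a b (X ^ r * g * h) s) ∧
      X ^ (s * i) ∣ X ^ i * pq a b (X ^ r * g * h) s := by
    intro s
    induction s with
    | zero => rw [Aq_zero, pq_zero]; exact ⟨Eo.one.cast (by simp), by simp⟩
    | succ s ih =>
      obtain ⟨h1, h2⟩ := ih
      constructor
      · rw [Aq_succ]
        refine Eo.add ((ha.mul h1).cast (by ring)) ?_
        have : X ^ r * g * h * pq a b (X ^ r * g * h) s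
            = X ^ (r - i) * ((X ^ i * pq a b (X ^ r * g * h) s) * (g * h)) := by
          have : (X : F[X]) ^ r = X ^ (r - i) * X ^ i := by
            rw [← pow_add]; congr 1; omega
          generalize pq a b (X ^ r * g * h) s = z
          rw [this]; ring
        rw [this]
        refine dm (dvd_refl _) (Dvd.dvd.mul_right h2 _) ?_
        have : (s + 1) * i = s * i + i := by ring
        omega
      · rw [pq_succ, mul_add]
        refine dvd_add ?_ ?_
        · exact dm (dvd_refl _) h1.dvd (by rw [add_mul]; omega)
        · rw [mul_left_comm]
          exact dm hb h2 (by rw [add_mul]; omega)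
  obtain ⟨h1, h2⟩ := key s
  obtain ⟨⟨-, cA, -⟩, cL⟩ := C s
  refine ⟨by have := (h1.mul (Eo.X_pow v)).le cA; omega, ?_⟩
  have hX : (X : F[X]) ^ (r + v) = X ^ i * X ^ (r - i + v) := by
    rw [← pow_add]; congr 1; omega
  have hp : ∀ z : F[X], X ^ (v + s * i) ∣ z * pq a b (X ^ r * g * h) s * X ^ (r + v) := by
    intro z
    have : z * pq a b (X ^ r * g * h) s * X ^ (r + v)
      = (X ^ i * pq a b (X ^ r * g * h) s) * (X ^ (r - i + v) * z) := by
        rw [hX]; ring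
    rw [this]
    exact dm h2 (Dvd.dvd.mul_right (dvd_refl _) _) (by omega)
  have := cL (min (s * d) (min (v + s * i) (r + v + v)))
    (dle (dpow hd s) (by omega)) (dm h1.dvd (dvd_refl _) (by omega))
    (dle (hp g) (by omega)) (dle (hp h) (by omega))
    (by
      rw [Bq, sub_mul]
      exact dvd_sub (dm h1.dvd (dvd_refl _) (by omega)) (dle (hp (a - b)) (by omega))) (by omega)
  omega

lemma ordZ {v r i j : ℕ} {a g h b : F[X]} {c : ℕ → ℕ} (C : Cor v r a g h b c) {d : ℕ}
    (hd : X ^ d ∣ a * b - X ^ r * g * h) (ha : X ^ i ∣ a) (hb : X ^ j ∣ b) (hir : r ≤ 2 * i)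
    (hjr : r ≤ 2 * j) (s : ℕ) :
    (s * d ≤ c s ∨ s * r + 2 * v ≤ 2 * c s ∨ r + v + v ≤ c s) := by
  have key : ∀ s, X ^ ((s * r + 1) / 2) ∣ (Aq a b (X ^ r * g * h) s) ∧
      X ^ (((s + 1) * r + 1) / 2) ∣ X ^ r * pq a b (X ^ r * g * h) s := by
    intro s
    induction s with
    | zero => rw [Aq_zero, pq_zero]; simp
    | succ s ih =>
      obtain ⟨h1, h2⟩ := ih
      have e1 : (s + 1) * r = s * r + r := by ring
      have e2 : (s + 1 + 1) * r = s * r + 2 * r := by ring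
      constructor
      · rw [Aq_succ]
        refine dvd_add (dm ha h1 (by omega)) ?_
        have : X ^ r * g * h * pq a b (X ^ r * g * h) s
            = ((X ^ r * pq a b (X ^ r * g * h) s) * (g * h)) := by
          ring
        rw [this]
        exact Dvd.dvd.mul_right h2 _
      · rw [pq_succ, mul_add]
        refine dvd_add ?_ ?_
        · exact dm (dvd_refl _) h1 (by omega)
        · rw [mul_left_comm]
          exact dm hb h2 (by omega)
  obtain ⟨h1, h2⟩ := key s
  have e1 : (s + 1) * r = s * r + r := by ring
  obtain ⟨-, cL⟩ := C s
  have hp : ∀ z : F[X], X ^ (v + (s * r + 1) / 2) ∣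
      z * pq a b (X ^ r * g * h) s * X ^ (r + v) := by
    intro z
    have : z * pq a b (X ^ r * g * h) s * X ^ (r + v)
      = (X ^ r * pq a b (X ^ r * g * h) s) * (X ^ v * z) := by
        rw [pow_add]; ring
    rw [this]
    exact dm h2 (Dvd.dvd.mul_right (dvd_refl _) _) (by omega)
  have := cL (min (s * d) (min (v + (s * r + 1) / 2) (r + v + v)))
    (dle (dpow hd s) (by omega)) (dm h1 (dvd_refl _) (by omega))
    (dle (hp g) (by omega)) (dle (hp h) (by omega))
    (by
      rw [Bq, sub_mul]
      exact dvd_sub (dm h1 (dvd_refl _) (by omega)) (dle (hp (a - b)) (by omega))) (by omega)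
  omega

/-- The auxiliary sequence with `A_s = a^s + t w_s`. -/
noncomputable def wq (a b t : F[X]) : ℕ → F[X]
  | 0 => 0
  | s + 1 => a * wq a b t s + pq a b t s

lemma Aq_wq (a b t : F[X]) (s : ℕ) : Aq a b t s = a ^ s + t * wq a b t s := by
  induction s with
  | zero => simp [Aq_zero, wq]
  | succ s ih => rw [Aq_succ, ih, wq]; ring

lemma ordY {v r i j og oh : ℕ} {a g h b : F[X]} {c : ℕ → ℕ} (C : Cor v r a g h b c) {d : ℕ}
    (hd : X ^ d ∣ a * b - X ^ r * g * h) (ha : X ^ i ∣ a) (hai : i < r → Eo i a)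
    (hb : Eo j b) (hji : j < i) (hjr : 2 * j < r)
    (og1 : og ≤ j) (og2 : X ^ og ∣ g) (og3 : og < j → Eo og g)
    (oh1 : oh ≤ j) (oh2 : X ^ oh ∣ h) (oh3 : oh < j → Eo oh h) (s : ℕ) :
    ((s + 2) * d ≤ c (s + 2) ∨ v + (s + 2) * i ≤ c (s + 2) ∨
        v + r + (og + oh) + s * j ≤ c (s + 2) ∨ r + v + v ≤ c (s + 2)) ∧
    ((s + 2) * i < r + s * j → c (s + 2) ≤ v + (s + 2) * i) ∧
    (r + (og + oh) + s * j < (s + 2) * i → c (s + 2) ≤ v + r + (og + oh) + s * j) := by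
  have key : ∀ s, Eo (s * j) (pq a b (X ^ r * g * h) (s + 1)) ∧
      Eo ((s + 1) * j) (Bq a b (X ^ r * g * h) (s + 1)) := by
    intro s
    induction s with
    | zero =>
      rw [pq_succ', Bq_succ, pq_zero, Bq_zero]
      simpa using ⟨Eo.one, hb⟩
    | succ s ih =>
      obtain ⟨h1, h2⟩ := ih
      constructor
      · rw [pq_succ']
        exact h2.add' (dm ha h1.dvd (by rw [add_mul]; omega))
      · rw [Bq_succ]
        refine ((hb.mul h2).cast (by ring)).add' ?_
        have : (s + 1 + 1) * j = s * j + 2 * j := by ring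
        exact dm (t_dvd r g h) h1.dvd (by omega)
  have kw : ∀ s, Eo (s * j) (wq a b (X ^ r * g * h) (s + 2)) := by
    intro s
    induction s with
    | zero => simpa [wq, pq_zero, pq_succ, Aq_zero] using Eo.one
    | succ s ih =>
      rw [wq]
      exact (key (s + 1)).1.add' (dm ha ih.dvd (by rw [add_mul]; omega))
  have k1 : Eo ((s + 1) * j) (pq a b (X ^ r * g * h) (s + 2)) := (key (s + 1)).1
  have k2 : Eo ((s + 2) * j) (Bq a b (X ^ r * g * h) (s + 2)) := (key (s + 1)).2
  have k3 := kw s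
  have e1 : (s + 1) * j = s * j + j := by ring
  have e2 : (s + 2) * j = s * j + 2 * j := by ring
  obtain ⟨⟨-, cA, cg, ch, cB⟩, cL⟩ := C (s + 2)
  have hA := Aq_wq a b (X ^ r * g * h) (s + 2)
  refine ⟨?_, ?_, ?_⟩
  · have ht : X ^ (r + og + oh) ∣ X ^ r * g * h :=
      dm (dm (dvd_refl _) og2 le_rfl) oh2 le_rfl
    have := cL (min ((s + 2) * d) (min (v + (s + 2) * i)
        (min (v + r + (og + oh) + s * j) (r + v + v))))
      (dle (dpow hd (s + 2)) (by omega))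
      (by
        rw [hA]
        refine dm (m := min ((s + 2) * i) (r + og + oh + s * j))
          (dvd_add (dle (dpow ha _) (by omega)) (dm ht k3.dvd (by omega))) (dvd_refl _) (by omega))
      (dm (dm og2 k1.dvd le_rfl) (dvd_refl _) (by omega))
      (dm (dm oh2 k1.dvd le_rfl) (dvd_refl _) (by omega))
      (dm k2.dvd (dvd_refl _) (by omega)) (by omega)
    omega
  · intro hlt
    have h2 : (s + 2) * i = s * i + 2 * i := by ring
    have h3 : s * j ≤ s * i := Nat.mul_le_mul_left s hji.le
    have hA' : Eo ((s + 2) * i) (Aq a b (X ^ r * g * h) (s + 2)) := by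
      rw [hA]
      exact ((hai (by omega)).pow _).add (dm (t_dvd r g h) k3.dvd (by omega))
    have := (hA'.mul (Eo.X_pow v)).le cA
    omega
  · intro hlt
    by_cases hg : og < j
    · by_cases hh : oh < j
      · have ht : Eo (r + og + oh) (X ^ r * g * h) :=
          ((Eo.X_pow r).mul (og3 hg)).mul (oh3 hh)
        have hA' : Eo (r + og + oh + s * j) (Aq a b (X ^ r * g * h) (s + 2)) := by
          rw [hA]
          exact (ht.mul k3).add' (dle (dpow ha _) (by omega))
        have := (hA'.mul (Eo.X_pow v)).le cA
        omega
      · have := (((og3 hg).mul k1).mul (Eo.X_pow (r + v))).le cg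
        omega
    · by_cases hh : oh < j
      · have := (((oh3 hh).mul k1).mul (Eo.X_pow (r + v))).le ch
        omega
      · have := (k2.mul (Eo.X_pow (r + v))).le cB
        omega

lemma orders {v r k l : ℕ} {a g h b : F[X]} {c : ℕ → ℕ} (C : Cor v r a g h b c)
    (hc : ∀ s, (c s : ℤ) = KT k l (min (l : ℤ) (r - k)) r v s)
    (hk1 : 1 ≤ k) (hk2 : k + 1 ≤ r) (hl1 : 1 ≤ l) (hl2 : l ≤ v) :
    X ^ k ∣ a ∧ X ^ (min l (r - k)) ∣ b ∧ X ^ (k + l) ∣ a * b - X ^ r * g * h := by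
  obtain ⟨q, Q⟩ := crit_exists (k : ℤ) l (min (l : ℤ) (r - k)) r v (fun s => (c s : ℤ)) hc
    (by omega) (by omega) (by omega) (by omega) (by omega) (by omega)
  have hone : c 1 = k + l := by have := Q.one; omega
  have hd : X ^ (k + l) ∣ a * b - X ^ r * g * h := by
    have := (C 1).1.1
    rwa [hone, pow_one] at this
  obtain ⟨i, hi1, hi2, hi3⟩ := exists_order a r
  obtain ⟨j, hj1, hj2, hj3⟩ := exists_order b r
  have hs : k + min l (r - k) ≤ i + j := by
    by_cases h1 : i < r
    · by_cases h2 : j < r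
      · refine ((hi3 h1).mul (hj3 h2)).le ?_
        have : a * b = (a * b - X ^ r * g * h) + X ^ r * g * h := by ring
        rw [this]
        exact dvd_add (dle hd (by omega)) (dle (t_dvd r g h) (by omega))
      · omega
    · omega
  have u1 : i < k → c 1 ≤ v + i := by
    intro hik
    have hA : Eo i (Aq a b (X ^ r * g * h) 1) := by
      rw [Aq_succ, pq_zero, Aq_zero]; simpa using hi3 (by omega)
    have := (hA.mul (Eo.X_pow v)).le (C 1).1.2.1
    omega
  suffices hfin : (k : ℤ) ≤ i ∧ (min (l : ℤ) (r - k)) ≤ j by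
    exact ⟨dle hi2 (by omega), dle hj2 (by omega), hd⟩
  have caseZ : r ≤ 2 * i → r ≤ 2 * j → (k : ℤ) ≤ i ∧ (min (l : ℤ) (r - k)) ≤ j := by
    intro h1 h2
    refine numZ Q (by omega) (by omega) (by omega) ?_
    intro s
    have := ordZ C hd hi2 hj2 h1 h2 s
    zify at this
    rcases this with h | h | h
    · left; linarith
    · right; left; linarith
    · right; right; linarith
  by_cases hij : i ≤ j
  · by_cases h1 : 2 * i < r
    · have := ordX C hd (hi3 (by omega)) (dle hj2 hij) h1
      refine numX Q (i := i) (j := j) (by omega) (by omega) (by omega) ?_ ?_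
      · intro s; have := (this s).1; zify at this; linarith
      · intro s
        have := (this s).2
        zify at this
        rcases this with h | h | h
        · left; linarith
        · right; left; linarith
        · right; right; linarith
    · exact caseZ (by omega) (by omega)
  · by_cases h1 : 2 * j < r
    · obtain ⟨og, og1, og2, og3⟩ := exists_order g j
      obtain ⟨oh, oh1, oh2, oh3⟩ := exists_order h j
      have := ordY C hd hi2 hi3 (hj3 (by omega)) (by omega) h1 og1 og2 og3 oh1 oh2 oh3
      refine numY Q (i := i) (j := j) (φ := og + oh) (by omega) (by omega) (by omega) (by omega)
        (by omega) ?_ ?_ ?_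
      · intro s
        have := (this s).1
        zify at this
        rcases this with h | h | h | h
        · left; linarith
        · right; left; linarith
        · right; right; left; linarith
        · right; right; right; linarith
      · intro s hlt
        have := (this s).2.1 (by zify; exact hlt)
        zify at this; linarith
      · intro s hlt
        have := (this s).2.2 (by zify; exact hlt)
        zify at this; linarith
    · exact caseZ (by omega) (by omega)

end Orders

section Final

variable {F : Type*} [Field F]

lemma eval_Av (u r : ℕ) (x : Vars u r → F) (i : ℕ) (hi : 1 ≤ i) :
    MvPolynomial.eval x (Av F u r i) = (paOf F u r x).coeff i := by
  unfold Av paOf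
  rw [finsetSum_coeff]
  simp only [coeff_C_mul, coeff_X_pow]
  split_ifs with h
  · rw [Finset.sum_eq_single (⟨i - 1, h⟩ : Fin (u - 1))]
    · rw [if_pos (show i = i - 1 + 1 by omega), mul_one, MvPolynomial.eval_X]
    · intro b _ hb
      rw [if_neg, mul_zero]
      intro h'
      exact hb (Fin.ext (by simp; omega))
    · simp
  · rw [map_zero, Finset.sum_eq_zero]
    intro b _
    rw [if_neg, mul_zero]
    have := b.2
    omega

lemma eval_Bv (u r : ℕ) (x : Vars u r → F) (i : ℕ) (hi : 1 ≤ i) :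
    MvPolynomial.eval x (Bv F u r i) = (pbOf F u r x).coeff i := by
  unfold Bv pbOf
  rw [finsetSum_coeff]
  simp only [coeff_C_mul, coeff_X_pow]
  split_ifs with h
  · rw [Finset.sum_eq_single (⟨i - 1, h⟩ : Fin (u - r - 1))]
    · rw [if_pos (show i = i - 1 + 1 by omega), mul_one, MvPolynomial.eval_X]
    · intro b _ hb
      rw [if_neg, mul_zero]
      intro h'
      exact hb (Fin.ext (by simp; omega))
    · simp
  · rw [map_zero, Finset.sum_eq_zero]
    intro b _
    rw [if_neg, mul_zero]
    have := b.2
    omega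

lemma eval_Gv (u r : ℕ) (x : Vars u r → F) (i : ℕ) :
    MvPolynomial.eval x (Gv F u r i) = (pgOf F u r x).coeff i := by
  unfold Gv pgOf
  rw [finsetSum_coeff]
  simp only [coeff_C_mul, coeff_X_pow]
  split_ifs with h
  · rw [Finset.sum_eq_single (⟨i, h⟩ : Fin (u - r))]
    · simp
    · intro b _ hb
      rw [if_neg, mul_zero]
      intro h'
      exact hb (Fin.ext (by simp; omega))
    · simp
  · rw [map_zero, Finset.sum_eq_zero]
    intro b _
    rw [if_neg, mul_zero]
    have := b.2
    omega

lemma eval_Hv (u r : ℕ) (x : Vars u r → F) (i : ℕ) :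
    MvPolynomial.eval x (Hv F u r i) = (phOf F u r x).coeff i := by
  unfold Hv phOf
  rw [finsetSum_coeff]
  simp only [coeff_C_mul, coeff_X_pow]
  split_ifs with h
  · rw [Finset.sum_eq_single (⟨i, h⟩ : Fin (u - r))]
    · simp
    · intro b _ hb
      rw [if_neg, mul_zero]
      intro h'
      exact hb (Fin.ext (by simp; omega))
    · simp
  · rw [map_zero, Finset.sum_eq_zero]
    intro b _
    rw [if_neg, mul_zero]
    have := b.2
    omega

lemma quad_zero (r k n m : ℕ) (hkr : k ≤ r) (a b g h : F[X]) (ha : X ^ k ∣ a)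
    (hb : X ^ (r - k) ∣ b) (hd : X ^ n ∣ a * b - X ^ r * g * h) (hm : r + m < n) :
    (∑ j ∈ Finset.range (m + 1), a.coeff (k + j) * b.coeff (r - k + m - j)) -
      (∑ j ∈ Finset.range (m + 1), g.coeff j * h.coeff (m - j)) = 0 := by
  obtain ⟨a1, rfl⟩ := ha
  obtain ⟨b1, rfl⟩ := hb
  have hX : (X : F[X]) ^ r = X ^ k * X ^ (r - k) := by
    rw [← pow_add]; congr 1; omega
  have e : X ^ k * a1 * (X ^ (r - k) * b1) - X ^ r * g * h = X ^ r * (a1 * b1 - g * h) := by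
    rw [hX]; ring
  rw [e] at hd
  have h0 := (X_pow_dvd_iff.mp hd) (r + m) hm
  rw [add_comm r m, coeff_X_pow_mul, coeff_sub, coeff_mul, coeff_mul,
    Finset.Nat.sum_antidiagonal_eq_sum_range_succ (fun i j => a1.coeff i * b1.coeff j),
    Finset.Nat.sum_antidiagonal_eq_sum_range_succ (fun i j => g.coeff i * h.coeff j)] at h0
  rw [← h0]
  congr 1
  refine Finset.sum_congr rfl fun j hj => ?_
  have hj' := Finset.mem_range.mp hj
  rw [show r - k + m - j = (m - j) + (r - k) by omega, add_comm k j, coeff_X_pow_mul,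
    coeff_X_pow_mul]

end Final

/-- If the Jordan type of `M_x` is the partition `P` whose Burge code is
`α^{u−r−l} β^l α^{r−k} β^k α`, then `x` lies in the zero locus `X^Q_{k,l}` of `E^Q_{k,l}`.
(`false = α`, `true = β`.) -/
theorem statement7 (F : Type*) [Field F] [Infinite F] (u r k l : ℕ)
    (hru : r < u) (hr : 2 ≤ r) (hk1 : 1 ≤ k) (hk2 : k ≤ r - 1)
    (hl1 : 1 ≤ l) (hl2 : l ≤ u - r)
    (P : Multiset ℕ) (hPpos : 0 ∉ P)
    (hcode : burgeCode P =
      List.replicate (u - r - l) false ++ List.replicate l true ++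
        List.replicate (r - k) false ++ List.replicate k true ++ [false])
    (x : Vars u r → F) (hx : JordanTypeIs F (Mx F u r hru.le x) P) :
    x ∈ Xlocus F u r k l := by
  have hc : ∀ s, ((Module.finrank F (LinearMap.ker (Mx F u r hru.le x ^ s)) : ℕ) : ℤ)
      = KT k l (min (l : ℤ) (r - k)) r ((u - r : ℕ) : ℤ) s := by
    intro s
    rw [hx s, Kf_of_code u r k l hru hk1 hk2 hl1 hl2 P hPpos hcode s, Nat.cast_sub hru.le]
  have hC : Cor (u - r) r (paOf F u r x) (pgOf F u r x) (phOf F u r x) (pbOf F u r x)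
      (fun s => Module.finrank F (LinearMap.ker (Mx F u r hru.le x ^ s))) := by
    intro s
    have h := corank u r hru.le (paOf F u r x) (pgOf F u r x) (phOf F u r x) (pbOf F u r x) s
      (Module.finrank F (LinearMap.ker (Mx F u r hru.le x ^ s))) rfl _ _ _ _ rfl rfl rfl rfl
    have e : r + (u - r) = u := by omega
    rw [e]
    exact h
  obtain ⟨ha, hb, hd⟩ := orders hC hc hk1 (by omega) hl1 hl2
  intro p hp
  have hA : ∀ i, 1 ≤ i → i ≤ k - 1 → MvPolynomial.eval x (Av F u r i) = 0 := by
    intro i h1 h2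
    rw [eval_Av u r x i h1]
    exact (X_pow_dvd_iff.mp ha) i (by omega)
  have hB : ∀ i, 1 ≤ i → i + 1 ≤ min l (r - k) → MvPolynomial.eval x (Bv F u r i) = 0 := by
    intro i h1 h2
    rw [eval_Bv u r x i h1]
    exact (X_pow_dvd_iff.mp hb) i (by omega)
  unfold Eset at hp
  split_ifs at hp with hkl
  · rcases hp with ⟨i, h1, h2, rfl⟩ | ⟨i, h1, h2, rfl⟩
    · exact hA i h1 h2
    · exact hB i h1 (by omega)
  · rcases hp with (⟨i, h1, h2, rfl⟩ | ⟨i, h1, h2, rfl⟩) | ⟨m, hm, rfl⟩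
    · exact hA i h1 h2
    · exact hB i h1 (by omega)
    · rw [← quad_zero r k (k + l) m (by omega) (paOf F u r x) (pbOf F u r x) (pgOf F u r x)
        (phOf F u r x) ha (by rwa [show min l (r - k) = r - k by omega] at hb) hd (by omega)]
      rw [map_sub, map_sum, map_sum]
      congr 1
      · refine Finset.sum_congr rfl fun j hj => ?_
        have hj' := Finset.mem_range.mp hj
        rw [map_mul, eval_Av u r x _ (by omega), eval_Bv u r x _ (by omega)]
      · refine Finset.sum_congr rfl fun j hj => ?_
        rw [map_mul, eval_Gv, eval_Hv]
end

section
/- Let u > r ≥ 2 be integers and 1 ≤ k ≤ r−1. If 2k ≤ r, then the Burge code of the partition ([u]^k, 1^{u−r}) is β^{u−r} α^{r−k} β^{k} α. If 2k > r, then the Burge code of the partition ([u+r−2k]^{r−k}, 1^{u+2k−2r}) is β^{u−r} α^{r−k} β^{k} α. -/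
open Polynomial

lemma dP_of (P rest : Multiset ℕ) (R : Finset ℕ) (h : Rset P = R) (hP : P = rest + R.val) :
    dP P = rest + ((R.val.map fun j => j - 1).filter fun j => 0 < j) := by
  unfold dP
  rw [h]
  congr 1
  rw [hP, Multiset.add_sub_cancel_right]

lemma sup_of (P : Multiset ℕ) (m : ℕ) (h : m ∈ P) (h2 : ∀ x ∈ P, x ≤ m) : P.sup = m :=
  le_antisymm (Multiset.sup_le.2 h2) (Multiset.le_sup h)

lemma RsetGo_gap (f : ℕ → ℕ) (n : ℕ) (h : ∀ j, 2 ≤ j → j ≤ n + 1 → f j = 0) :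
    RsetGo f (n + 1) = if 0 < f 1 then {1} else ∅ := by
  induction n with
  | zero => rfl
  | succ n ih =>
    rw [RsetGo, if_neg (by rw [h (n + 2) (by omega) (by omega)]; simp)]
    exact ih fun j h1 h2 => h j h1 (by omega)

/-- general state -/
def Qst (a c z b : ℕ) : Multiset ℕ :=
  Multiset.replicate c (a + 1) + Multiset.replicate z a + Multiset.replicate b 1

lemma Rset_Qst (a c z b : ℕ) :
    Rset (Qst (a + 2) (c + 1) z b) = insert (a + 3) (if 0 < b then {1} else ∅) := by
  unfold Rset
  rw [sup_of _ (a + 3)]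
  · rw [RsetGo, if_pos, RsetGo_gap]
    · congr 1
      simp [Qst, Multiset.count_replicate]
    · intro j h1 h2
      simp only [Qst, Multiset.count_add, Multiset.count_replicate]
      repeat rw [if_neg (by omega)]
    · simp [Qst, Multiset.count_replicate]
  · simp [Qst]
  · intro x hx
    simp only [Qst, Multiset.mem_add, Multiset.mem_replicate] at hx
    omega

lemma dP_Qst_succ (a c z b : ℕ) :
    dP (Qst (a + 2) (c + 1) z (b + 1)) = Qst (a + 2) c (z + 1) b := by
  rw [dP_of _ (Qst (a + 2) c z b) {a + 3, 1}]
  · simp only [Qst, Finset.insert_val, Finset.singleton_val]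
    rw [Multiset.ndinsert_of_notMem (by simp)]
    simp [Multiset.replicate_succ, Multiset.filter_singleton, ← Multiset.singleton_add]
    abel
  · rw [Rset_Qst]; simp
  · simp only [Qst, Finset.insert_val, Finset.singleton_val]
    rw [Multiset.ndinsert_of_notMem (by simp)]
    simp only [Multiset.replicate_succ, ← Multiset.singleton_add]
    abel

lemma dP_Qst_zero (a c z : ℕ) :
    dP (Qst (a + 2) (c + 1) z 0) = Qst (a + 2) c (z + 1) 0 := by
  rw [dP_of _ (Qst (a + 2) c z 0) {a + 3}]
  · simp [Qst, Multiset.replicate_succ, Multiset.filter_singleton, ← Multiset.singleton_add]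
    abel
  · rw [Rset_Qst]; simp
  · simp [Qst, Multiset.replicate_succ, ← Multiset.singleton_add]
    abel

lemma Rset_two (x y : ℕ) :
    Rset (Multiset.replicate (x + 1) 2 + Multiset.replicate y 1) = {2} := by
  unfold Rset
  rw [sup_of _ 2]
  · rw [RsetGo, if_pos]
    · simp [RsetGo]
    · simp [Multiset.count_replicate]
  · simp
  · intro z hz
    simp only [Multiset.mem_add, Multiset.mem_replicate] at hz
    omega

lemma dP_two (x y : ℕ) :
    dP (Multiset.replicate (x + 1) 2 + Multiset.replicate y 1) =
      Multiset.replicate x 2 + Multiset.replicate (y + 1) 1 := by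
  rw [dP_of _ (Multiset.replicate x 2 + Multiset.replicate y 1) {2} (Rset_two x y)]
  · simp [Multiset.replicate_succ, Multiset.filter_singleton, ← Multiset.singleton_add]
    abel
  · simp [Multiset.replicate_succ, ← Multiset.singleton_add]
    abel

lemma Rset_one (x : ℕ) : Rset (Multiset.replicate (x + 1) 1) = {1} := by
  unfold Rset
  rw [sup_of _ 1]
  · simp [RsetGo]
  · simp
  · intro z hz
    simp only [Multiset.mem_replicate] at hz
    omega

lemma dP_one (x : ℕ) : dP (Multiset.replicate (x + 1) 1) = Multiset.replicate x 1 := by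
  rw [dP_of _ (Multiset.replicate x 1) {1} (Rset_one x)]
  · simp [Multiset.filter_singleton]
  · simp [Multiset.replicate_succ, ← Multiset.singleton_add]
    abel

lemma arPart_eq (a k c : ℕ) (hk : 1 ≤ k) (hc : c ≤ k) :
    arPart (a * k + c) k = Multiset.replicate c (a + 1) + Multiset.replicate (k - c) a := by
  unfold arPart
  rcases hc.lt_or_eq with h | h
  · have h1 : (a * k + c) % k = c := by
      rw [Nat.mul_add_mod_self_right, Nat.mod_eq_of_lt h]
    have h2 : (a * k + c) / k = a := by
      rw [mul_comm, Nat.mul_add_div hk, Nat.div_eq_of_lt h, add_zero]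
    rw [h1, h2]
  · subst h
    have h0 : a * c + c = (a + 1) * c := by ring
    rw [h0, Nat.mul_mod_left, Nat.mul_div_cancel _ hk]
    simp

lemma burge_one (x n : ℕ) (hn : x + 1 ≤ n) :
    burgeGo n (Multiset.replicate x 1) = List.replicate x true ++ [false] := by
  induction x generalizing n with
  | zero =>
    obtain ⟨n, rfl⟩ : ∃ m, n = m + 1 := ⟨n - 1, by omega⟩
    simp [burgeGo]
  | succ x ih =>
    obtain ⟨n, rfl⟩ : ∃ m, n = m + 1 := ⟨n - 1, by omega⟩
    rw [burgeGo, if_neg (by simp [Multiset.replicate_succ]), Rset_one, dP_one,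
      ih n (by omega)]
    simp [List.replicate_succ]

lemma burge_two (x y n : ℕ) (hn : x + (x + y) + 1 ≤ n) :
    burgeGo n (Multiset.replicate x 2 + Multiset.replicate y 1) =
      List.replicate x false ++ List.replicate (x + y) true ++ [false] := by
  induction x generalizing n y with
  | zero => simpa using burge_one y n (by omega)
  | succ x ih =>
    obtain ⟨n, rfl⟩ : ∃ m, n = m + 1 := ⟨n - 1, by omega⟩
    rw [burgeGo, if_neg (by simp [Multiset.replicate_succ]), Rset_two, dP_two,
      ih (y + 1) n (by omega), show x + 1 + y = x + (y + 1) by omega]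
    simp [List.replicate_succ]

lemma ar_form (k j b : ℕ) (hk : 1 ≤ k) : ∃ a c, arPart (2 * k + (j + 1)) k +
    Multiset.replicate b 1 = Qst (a + 2) (c + 1) (k - (c + 1)) b ∧ c + 1 ≤ k ∧
    ∀ b', arPart (2 * k + j) k + Multiset.replicate b' 1 = 
      Qst (a + 2) c (k - (c + 1) + 1) b' := by
  have hlt := Nat.mod_lt j hk
  have hd := Nat.div_add_mod j k
  refine ⟨j / k, j % k, ?_, by omega, fun b' => ?_⟩
  · have : 2 * k + (j + 1) = (j / k + 2) * k + (j % k + 1) := by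
      linarith [mul_comm k (j / k), add_mul (j / k) 2 k]
    rw [this, arPart_eq _ _ _ hk (by omega)]
    rfl
  · have : 2 * k + j = (j / k + 2) * k + (j % k) := by
      linarith [mul_comm k (j / k), add_mul (j / k) 2 k]
    rw [this, arPart_eq _ _ _ hk (by omega), show k - (j % k + 1) + 1 = k - j % k by omega]
    rfl

lemma burge_beta (k j b i n : ℕ) (hk : 1 ≤ k) :
    burgeGo (n + i) (arPart (2 * k + (j + i)) k + Multiset.replicate (b + i) 1) =
      List.replicate i true ++ burgeGo n (arPart (2 * k + j) k + Multiset.replicate b 1) := by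
  induction i with
  | zero => simp
  | succ i ih =>
    obtain ⟨a, c, h1, h2, h3⟩ := ar_form k (j + i) (b + i + 1) hk
    rw [← add_assoc n, ← add_assoc j, ← add_assoc b, h1, burgeGo,
      if_neg (by simp [Qst, Multiset.replicate_succ]), dP_Qst_succ, ← h3, ih, Rset_Qst]
    simp [List.replicate_succ]

lemma burge_alpha (k i n : ℕ) (hk : 1 ≤ k) :
    burgeGo (n + i) (arPart (2 * k + i) k) =
      List.replicate i false ++ burgeGo n (arPart (2 * k) k) := by
  induction i with
  | zero => simp
  | succ i ih =>
    obtain ⟨a, c, h1, h2, h3⟩ := ar_form k i 0 hk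
    have h3 := h3 0
    simp only [Multiset.replicate_zero, add_zero] at h1 h3
    rw [← add_assoc n, h1, burgeGo,
      if_neg (by simp [Qst, Multiset.replicate_succ]), dP_Qst_zero, ← h3, ih, Rset_Qst]
    simp [List.replicate_succ]

lemma arPart_two (k : ℕ) (hk : 1 ≤ k) : arPart (2 * k) k = Multiset.replicate k 2 := by
  have := arPart_eq 2 k 0 hk (by omega)
  simpa using this

lemma arPart_sum (m k : ℕ) (hk : 1 ≤ k) : (arPart m k).sum = m := by
  have hlt := Nat.mod_lt m hk
  have hd := Nat.div_add_mod m k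
  obtain ⟨z, hz⟩ : ∃ z, k = m % k + z := ⟨k - m % k, by omega⟩
  have h1 : k - m % k = z := by omega
  simp only [arPart, Multiset.sum_add, Multiset.sum_replicate, smul_eq_mul, h1]
  calc _ = (m % k + z) * (m / k) + m % k := by ring
    _ = m := by rw [← hz]; exact hd

/-- If `2k ≤ r`, the Burge code of `([u]^k, 1^{u−r})` is
`β^{u−r} α^{r−k} β^k α`; if `2k > r`, the Burge code of `([u+r−2k]^{r−k}, 1^{u+2k−2r})`
is `β^{u−r} α^{r−k} β^k α`. (`false = α`, `true = β`.) -/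
theorem statement9 (u r k : ℕ) (hru : r < u) (hr : 2 ≤ r) (hk1 : 1 ≤ k) (hk2 : k ≤ r - 1) :
    (2 * k ≤ r →
      burgeCode (arPart u k + Multiset.replicate (u - r) 1) =
        List.replicate (u - r) true ++ List.replicate (r - k) false ++
          List.replicate k true ++ [false]) ∧
    (r < 2 * k →
      burgeCode (arPart (u + r - 2 * k) (r - k) + Multiset.replicate (u + 2 * k - 2 * r) 1) =
        List.replicate (u - r) true ++ List.replicate (r - k) false ++
          List.replicate k true ++ [false]) := by
  constructor
  · intro h
    unfold burgeCode
    rw [Multiset.sum_add, arPart_sum _ _ hk1, Multiset.sum_replicate, smul_eq_mul, mul_one]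
    have e := burge_beta k (r - 2 * k) 0 (u - r) (u + 1) hk1
    rw [show 2 * k + (r - 2 * k + (u - r)) = u by omega, zero_add,
      show u + 1 + (u - r) = u + (u - r) + 1 by omega,
      show u + 1 = (u + 1 - (r - 2 * k)) + (r - 2 * k) by omega,
      Multiset.replicate_zero, add_zero, burge_alpha _ _ _ hk1, arPart_two _ hk1] at e
    have e2 := burge_two k 0 (u + 1 - (r - 2 * k)) (by omega)
    rw [Multiset.replicate_zero, add_zero, add_zero] at e2
    rw [e, e2, show r - k = (r - 2 * k) + k by omega, List.replicate_add (r - 2 * k)]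
    simp only [List.append_assoc]
  · intro h
    have hk : 1 ≤ r - k := by omega
    unfold burgeCode
    rw [Multiset.sum_add, arPart_sum _ _ hk, Multiset.sum_replicate, smul_eq_mul, mul_one]
    have e := burge_beta (r - k) 0 (2 * k - r) (u - r) (u + 1) hk
    rw [show 2 * (r - k) + (0 + (u - r)) = u + r - 2 * k by omega,
      show 2 * k - r + (u - r) = u + 2 * k - 2 * r by omega,
      show u + 1 + (u - r) = u + r - 2 * k + (u + 2 * k - 2 * r) + 1 by omega,
      add_zero, arPart_two _ hk, burge_two _ _ _ (by omega),
      show r - k + (2 * k - r) = k by omega] at e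
    rw [e]
    simp only [List.append_assoc]
end
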